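/- arXiv:2206.00185 — 3 statements merged into one kernel-verified Lean document; each statement's English description precedes it below -/
import Mathlib

section
/- Let n ≥ 3 and let K ⊆ ℝⁿ be a star body (star-shaped about the origin with radial function positive and continuous on S^{n-1}). Then equality V(K) · V(K^◇) = ω_n² holds if and only if K = r·Bⁿ for some r > 0, i.e., K is a Euclidean ball centered at the origin. -/
/-!
The inequality `V(K) V(K^◇) ≤ ω_n²` is a chain of two inequalities, and a star body attaining
equality in both of them is a ball. Write `K°` for the symmetric polar `absPolar K`, the set of `x`
with `|⟪x, k⟫| ≤ 1` for all `k ∈ K`.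

*Blaschke–Santaló.* `V(K) V(K°) ≤ ω_n²` (`blaschke_santalo`). This follows from the functional
Santaló inequality `∫ f ∫ g ≤ πⁿ` for `f x * g y ≤ exp (-2 ⟪x, y⟫)` and `f` centred (`santaloAt`),
applied to `exp (-p²)` and `exp (-q²)` with `p`, `q` the support functions of `K°` and `K ∪ -K`. The
functional inequality is proved by Lehec's induction on the dimension: an affine change of variables makes a
hyperplane bisect the mass of the other function `g` with both half-barycentres on a line transversal to it
(`exists_balanced_shear`), and on each half-space the one-dimensional inequality
`half_line_santalo`, a consequence of Prékopa–Leindler, reduces to the marginals (`santalo_half`).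

*Rotation averaging.* `V(K^◇) ≤ V(K°)`. Bessel's inequality shows that `x ∈ K^◇`, `y ⊥ x` and
`‖y‖ = ‖x‖` imply `y ∈ K°`. Integrating this over all orthonormal pairs with respect to Haar measure
on the orthogonal group gives the volume inequality (`volume_le_of_orthogonal`).

*Equality.* If `V(K^◇) = V(K°)`, then conversely every vector orthogonal to, and as long as, an
interior vector of `K°` lies in `K^◇` (`mem_of_volume_eq_of_orthogonal`). For `n ≥ 3` any two vectors
have a common perpendicular, so going from `K°` to `K^◇` and back reaches all vectors of the same
length, and `K°` is a ball of some radius `R` (`absPolar_eq_closedBall`). Then `K` is contained in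
the ball of radius `1 / R` and has the same volume, hence equals it.
-/

open MeasureTheory Metric Set
open scoped RealInnerProductSpace ENNReal

noncomputable section

/-- `[x,y]`: the area of the parallelogram spanned by `x` and `y`. -/
def sinePair {n : ℕ} (x y : EuclideanSpace ℝ (Fin n)) : ℝ :=
  Real.sqrt (‖x‖ ^ 2 * ‖y‖ ^ 2 - ⟪x, y⟫ ^ 2)

/-- `ω_q = π^{q/2}/Γ(1+q/2)`. -/
def omegaVol (q : ℝ) : ℝ := Real.pi ^ (q / 2) / Real.Gamma (1 + q / 2)

/-- The rotation invariant probability measure on the unit sphere `S^{n-1}`. -/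
def sphereProb (n : ℕ) : Measure (sphere (0 : EuclideanSpace ℝ (Fin n)) 1) :=
  ((volume : Measure (EuclideanSpace ℝ (Fin n))).toSphere univ)⁻¹ •
    (volume : Measure (EuclideanSpace ℝ (Fin n))).toSphere

/-- The radial function of a set star-shaped about the origin. -/
def radialFn {n : ℕ} (K : Set (EuclideanSpace ℝ (Fin n))) (u : EuclideanSpace ℝ (Fin n)) : ℝ :=
  sSup {r : ℝ | 0 ≤ r ∧ r • u ∈ K}

/-- `K` is star-shaped about the origin. -/
def IsStarShaped {n : ℕ} (K : Set (EuclideanSpace ℝ (Fin n))) : Prop :=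
  0 ∈ K ∧ ∀ x ∈ K, ∀ t : ℝ, 0 ≤ t → t ≤ 1 → t • x ∈ K

/-- `K` is a star body: star-shaped about the origin, with radial function positive and
continuous on the unit sphere, and `K = {r • u : u ∈ S^{n-1}, 0 ≤ r ≤ ρ_K(u)}`. -/
def IsStarBody {n : ℕ} (K : Set (EuclideanSpace ℝ (Fin n))) : Prop :=
  IsStarShaped K ∧
  (∀ u ∈ sphere (0 : EuclideanSpace ℝ (Fin n)) 1, 0 < radialFn K u) ∧
  ContinuousOn (radialFn K) (sphere (0 : EuclideanSpace ℝ (Fin n)) 1) ∧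
  ∀ u ∈ sphere (0 : EuclideanSpace ℝ (Fin n)) 1, ∀ r : ℝ, 0 ≤ r →
    (r • u ∈ K ↔ r ≤ radialFn K u)

/-- The constant `c̃_{n,p}`. -/
def tildeC (n : ℕ) (p : ℝ) : ℝ :=
  ((n : ℝ) - 1) * omegaVol ((n : ℝ) - 1) * omegaVol ((n : ℝ) + p - 2) /
    (((n : ℝ) + p) * omegaVol (n : ℝ) * omegaVol ((n : ℝ) + p - 3))

/-- The polar body `Λ_p°K` of the `L_p`-sine centroid body of `K`. -/
def sineCentroidPolar (n : ℕ) (p : ℝ) (K : Set (EuclideanSpace ℝ (Fin n))) :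
    Set (EuclideanSpace ℝ (Fin n)) :=
  {x | ∫ y in K, sinePair x y ^ p ≤ tildeC n p * (volume K).toReal}

/-- The sine polar body `K^◇`. -/
def sinePolar {n : ℕ} (K : Set (EuclideanSpace ℝ (Fin n))) : Set (EuclideanSpace ℝ (Fin n)) :=
  {x | ∀ y ∈ K, sinePair x y ≤ 1}

/-- The closed solid cylinder `C⁻(u,r)`. -/
def solidCylinder {n : ℕ} (u : EuclideanSpace ℝ (Fin n)) (r : ℝ) :
    Set (EuclideanSpace ℝ (Fin n)) := {x | sinePair x u ≤ r}

/-- `K ∈ C_e^n`: an origin-symmetric convex body that is an intersection of closed solid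
cylinders. -/
def IsCylBody {n : ℕ} (K : Set (EuclideanSpace ℝ (Fin n))) : Prop :=
  IsCompact K ∧ Convex ℝ K ∧ (interior K).Nonempty ∧ (∀ x ∈ K, -x ∈ K) ∧
  ∃ I : Set (EuclideanSpace ℝ (Fin n) × ℝ),
    (∀ c ∈ I, c.1 ∈ sphere (0 : EuclideanSpace ℝ (Fin n)) 1 ∧ 0 < c.2) ∧
    K = ⋂ c ∈ I, solidCylinder c.1 c.2

/-- The cylindrical hull of a set. -/
def cylHull {n : ℕ} (E : Set (EuclideanSpace ℝ (Fin n))) : Set (EuclideanSpace ℝ (Fin n)) :=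
  ⋂ c ∈ {c : EuclideanSpace ℝ (Fin n) × ℝ |
      c.1 ∈ sphere (0 : EuclideanSpace ℝ (Fin n)) 1 ∧ 0 < c.2 ∧ E ⊆ solidCylinder c.1 c.2},
    solidCylinder c.1 c.2

/-- The cylindrical support function `c_K`. -/
def cylSupport {n : ℕ} (K : Set (EuclideanSpace ℝ (Fin n))) (x : EuclideanSpace ℝ (Fin n)) : ℝ :=
  sSup ((fun y => sinePair x y) '' K)

/-- The support function `h_K`. -/
def suppFn {n : ℕ} (K : Set (EuclideanSpace ℝ (Fin n))) (x : EuclideanSpace ℝ (Fin n)) : ℝ :=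
  sSup ((fun y => ⟪x, y⟫) '' K)

/-! ### The Prékopa–Leindler inequality on the line -/

/-- The one-dimensional Brunn–Minkowski inequality. As `W` is an interval, it follows by comparing
diameters, with no measurability of `A` and `B` needed. -/
lemma volume_add_volume_le_of_midpoints {A B W : Set ℝ} (hA : A.Nonempty) (hB : B.Nonempty)
    (hW : W.OrdConnected) (h : ∀ p ∈ A, ∀ q ∈ B, (p + q) / 2 ∈ W) :
    volume A + volume B ≤ 2 * volume W := by
  have key : ∀ p ∈ A, ∀ p' ∈ A, ∀ q ∈ B, ∀ q' ∈ B,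
      edist p p' + edist q q' ≤ 2 * volume W := by
    have aux : ∀ p ∈ A, ∀ p' ∈ A, ∀ q ∈ B, ∀ q' ∈ B, p ≤ p' → q ≤ q' →
      edist p p' + edist q q' ≤ 2 * volume W := by
      intro p hp p' hp' q hq q' hq' hpp hqq
      have hsub : Icc ((p + q) / 2) ((p' + q') / 2) ⊆ W := hW.out (h p hp q hq) (h p' hp' q' hq')
      have := measure_mono (μ := volume) hsub
      rw [Real.volume_Icc] at this
      calc edist p p' + edist q q' = 2 * ENNReal.ofReal ((p' + q') / 2 - (p + q) / 2) := by
            rw [edist_comm p, edist_comm q, edist_dist, edist_dist, Real.dist_eq, Real.dist_eq,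
              abs_of_nonneg (by linarith), abs_of_nonneg (by linarith),
              ← ENNReal.ofReal_add (by linarith) (by linarith),
              show (2 : ℝ≥0∞) = ENNReal.ofReal 2 by simp,
              ← ENNReal.ofReal_mul (by norm_num)]
            congr 1; ring
        _ ≤ _ := by gcongr
    intro p hp p' hp' q hq q' hq'
    rcases le_total p p' with h1 | h1 <;> rcases le_total q q' with h2 | h2
    · exact aux p hp p' hp' q hq q' hq' h1 h2
    · rw [edist_comm q]; exact aux p hp p' hp' q' hq' q hq h1 h2
    · rw [edist_comm p]; exact aux p' hp' p hp q hq q' hq' h1 h2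
    · rw [edist_comm p, edist_comm q]; exact aux p' hp' p hp q' hq' q hq h1 h2
  refine (add_le_add (Real.volume_le_diam A) (Real.volume_le_diam B)).trans ?_
  obtain ⟨p₀, hp₀⟩ := hA
  obtain ⟨q₀, hq₀⟩ := hB
  have h1 : ∀ q ∈ B, ∀ q' ∈ B, ediam A + edist q q' ≤ 2 * volume W := by
    intro q hq q' hq'
    have hle : edist q q' ≤ 2 * volume W :=
      le_trans (by simp) (key p₀ hp₀ p₀ hp₀ q hq q' hq')
    calc ediam A + edist q q' ≤ (2 * volume W - edist q q') + edist q q' := by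
          gcongr
          refine ediam_le fun p hp p' hp' => ?_
          exact ENNReal.le_sub_of_add_le_right (edist_ne_top _ _) (key p hp p' hp' q hq q' hq')
      _ = _ := tsub_add_cancel_of_le hle
  by_cases hWt : volume W = ⊤
  · simp [hWt]
  have hAle : ediam A ≤ 2 * volume W := le_trans (by simp) (h1 q₀ hq₀ q₀ hq₀)
  have hAt : ediam A ≠ ⊤ := ne_top_of_le_ne_top (by finiteness) hAle
  calc ediam A + ediam B ≤ ediam A + (2 * volume W - ediam A) := by
        gcongr
        refine ediam_le fun q hq q' hq' => ?_
        exact ENNReal.le_sub_of_add_le_left hAt (h1 q hq q' hq')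
    _ = _ := add_tsub_cancel_of_le hAle

/-- Layer cake lower bound: only the levels below `a` are counted. -/
lemma le_lintegral_layer {h : ℝ → ℝ} (hm : Measurable h) (h0 : ∀ x, 0 ≤ h x) {a : ℝ} (ha : 0 < a) :
    ENNReal.ofReal a * ∫⁻ t in Ioo (0 : ℝ) 1, volume {x | t * a < h x}
      ≤ ∫⁻ x, ENNReal.ofReal (h x) := by
  have e : ∫⁻ x, ENNReal.ofReal (h x) = ENNReal.ofReal a * ∫⁻ x, ENNReal.ofReal (h x / a) := by
    rw [← lintegral_const_mul _ (by fun_prop)]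
    congr with x
    rw [← ENNReal.ofReal_mul ha.le]; congr 1; field_simp
  rw [e, lintegral_eq_lintegral_meas_lt volume
    (Filter.Eventually.of_forall fun x => div_nonneg (h0 x) ha.le) (by fun_prop)]
  simp_rw [lt_div_iff₀ ha]
  exact mul_le_mul' le_rfl (lintegral_mono_set Ioo_subset_Ioi_self)

lemma lintegral_layer_eq {h : ℝ → ℝ} (hm : Measurable h) (h0 : ∀ x, 0 ≤ h x) {a : ℝ} (ha : 0 < a)
    (hle : ∀ x, h x ≤ a) :
    ∫⁻ x, ENNReal.ofReal (h x) =
    ENNReal.ofReal a * ∫⁻ t in Ioo (0 : ℝ) 1, volume {x | t * a < h x} := by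
  have e : ∫⁻ x, ENNReal.ofReal (h x) = ENNReal.ofReal a * ∫⁻ x, ENNReal.ofReal (h x / a) := by
    rw [← lintegral_const_mul _ (by fun_prop)]
    congr with x
    rw [← ENNReal.ofReal_mul ha.le]; congr 1; field_simp
  rw [e, lintegral_eq_lintegral_meas_lt volume
    (Filter.Eventually.of_forall fun x => div_nonneg (h0 x) ha.le) (by fun_prop)]
  simp_rw [lt_div_iff₀ ha]
  congr 1
  rw [← Ioo_union_Ici_eq_Ioi zero_lt_one, lintegral_union measurableSet_Ici
    (by rw [Set.disjoint_left]; rintro x ⟨_, h1⟩ h2; exact absurd h1 (not_lt.2 h2))]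
  have : ∫⁻ t in Ici (1 : ℝ), volume {x | t * a < h x} = 0 := by
    rw [setLIntegral_congr_fun (g := fun _ => 0) measurableSet_Ici]
    · simp
    · intro t ht
      have : {x | t * a < h x} = ∅ := by
        ext x
        simp only [mem_ofPred_eq, mem_empty_iff_false, iff_false, not_lt]
        have := hle x
        have : a ≤ t * a := le_mul_of_one_le_left ha.le ht
        linarith
      simp only [this, measure_empty]
  rw [this, add_zero]

lemma ENNReal.mul_le_sq_of_add_le {x y z : ℝ≥0∞} (h : x + y ≤ 2 * z) : x * y ≤ z ^ 2 := by
  rcases eq_or_ne z ⊤ with rfl | hz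
  · simp
  have hx : x ≠ ⊤ := ne_top_of_le_ne_top (by finiteness) (le_self_add.trans h)
  have hy : y ≠ ⊤ := ne_top_of_le_ne_top (by finiteness) (le_add_self.trans h)
  lift x to NNReal using hx
  lift y to NNReal using hy
  lift z to NNReal using hz
  norm_cast at *
  rw [← NNReal.coe_le_coe] at *
  push_cast at *
  nlinarith [sq_nonneg ((x : ℝ) - y), x.2, y.2, z.2]

/-- Prékopa–Leindler on the line, for a quasiconcave `h`: the superlevel sets of `φ` and `ψ` at the
same fraction `t` of their suprema have their midpoints in a superlevel set of `h`, which is an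
interval; integrate over `t ∈ (0,1)` and apply the arithmetic-geometric mean inequality. -/
lemma prekopa_leindler_quasiconcave {φ ψ h : ℝ → ℝ} (hφ : Measurable φ) (hψ : Measurable ψ)
    (hh : Measurable h) (φ0 : ∀ x, 0 ≤ φ x) (ψ0 : ∀ x, 0 ≤ ψ x) (h0 : ∀ x, 0 ≤ h x)
    (φb : BddAbove (range φ)) (ψb : BddAbove (range ψ))
    (hq : ∀ r, {x | r < h x}.OrdConnected) {M : ℝ} (hM : 0 < M)
    (H : ∀ p q, φ p * ψ q ≤ M * h ((p + q) / 2) ^ 2) :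
    (∫⁻ x, ENNReal.ofReal (φ x)) * (∫⁻ x, ENNReal.ofReal (ψ x)) ≤
      ENNReal.ofReal M * (∫⁻ x, ENNReal.ofReal (h x)) ^ 2 := by
  set a := sSup (range φ) with ha
  set b := sSup (range ψ) with hb
  have φa : ∀ x, φ x ≤ a := fun x => le_csSup φb ⟨x, rfl⟩
  have ψb' : ∀ x, ψ x ≤ b := fun x => le_csSup ψb ⟨x, rfl⟩
  have a0 : 0 ≤ a := (φ0 0).trans (φa 0)
  have b0 : 0 ≤ b := (ψ0 0).trans (ψb' 0)
  rcases a0.eq_or_lt with a0 | a0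
  · have : ∀ x, φ x = 0 := fun x => le_antisymm ((φa x).trans a0.symm.le) (φ0 x)
    simp [this]
  rcases b0.eq_or_lt with b0 | b0
  · have : ∀ x, ψ x = 0 := fun x => le_antisymm ((ψb' x).trans b0.symm.le) (ψ0 x)
    simp [this]
  -- the level of `h` matching the suprema `a` of `φ` and `b` of `ψ`
  set κ := √(a * b / M) with hκ
  have κ0 : 0 < κ := by positivity
  have κ2 : M * κ ^ 2 = a * b := by rw [hκ, Real.sq_sqrt (by positivity)]; field_simp
  rw [lintegral_layer_eq hφ φ0 a0 φa, lintegral_layer_eq hψ ψ0 b0 ψb']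
  set X := ∫⁻ t in Ioo (0 : ℝ) 1, volume {x | t * a < φ x} with hX
  set Y := ∫⁻ t in Ioo (0 : ℝ) 1, volume {x | t * b < ψ x} with hY
  set Z := ∫⁻ t in Ioo (0 : ℝ) 1, volume {x | t * κ < h x} with hZ
  have hXYZ : X + Y ≤ 2 * Z := by
    have mX : Measurable fun t : ℝ => volume {x | t * a < φ x} := by
      apply Antitone.measurable
      intro s t hst
      apply measure_mono
      intro x (hx : t * a < φ x)
      exact lt_of_le_of_lt (by gcongr) hx
    rw [hX, hY, ← lintegral_add_left mX, hZ, ← lintegral_const_mul' _ _ (by simp)]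
    refine setLIntegral_mono' measurableSet_Ioo fun t ht => ?_
    apply volume_add_volume_le_of_midpoints _ _ (hq _)
    · intro p hp q hq
      simp only [mem_ofPred_eq] at hp hq ⊢
      have h1 : (t * a) * (t * b) < φ p * ψ q :=
        mul_lt_mul'' hp hq (by have := ht.1; positivity) (by have := ht.1; positivity)
      have h2 := h1.trans_le (H p q)
      have h3 : (t * κ) ^ 2 < h ((p + q) / 2) ^ 2 := by
        have : M * (t * κ) ^ 2 = (t * a) * (t * b) := by
          rw [mul_pow]; linear_combination t ^ 2 * κ2
        rw [← this] at h2
        exact lt_of_mul_lt_mul_left h2 hM.le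
      exact lt_of_pow_lt_pow_left₀ 2 (h0 _) h3
    · have : t * a < sSup (range φ) := by nlinarith [ht.2]
      obtain ⟨_, ⟨x, rfl⟩, hx⟩ := exists_lt_of_lt_csSup (range_nonempty _) this
      exact ⟨x, hx⟩
    · have : t * b < sSup (range ψ) := by nlinarith [ht.2]
      obtain ⟨_, ⟨x, rfl⟩, hx⟩ := exists_lt_of_lt_csSup (range_nonempty _) this
      exact ⟨x, hx⟩
  calc ENNReal.ofReal a * X * (ENNReal.ofReal b * Y)
      = ENNReal.ofReal (a * b) * (X * Y) := by rw [ENNReal.ofReal_mul a0.le]; ring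
    _ ≤ ENNReal.ofReal (a * b) * Z ^ 2 := by gcongr; exact ENNReal.mul_le_sq_of_add_le hXYZ
    _ = ENNReal.ofReal M * (ENNReal.ofReal κ * Z) ^ 2 := by
        rw [← κ2, ENNReal.ofReal_mul hM.le, ENNReal.ofReal_pow κ0.le]; ring
    _ ≤ _ := by gcongr; exact le_lintegral_layer hh h0 κ0

lemma lintegral_Ioi_eq_exp (k : ℝ → ℝ) :
    ∫⁻ s in Ioi (0 : ℝ), ENNReal.ofReal (k s)
      = ∫⁻ p, ENNReal.ofReal (Real.exp p * k (Real.exp p)) := by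
  have := lintegral_image_eq_lintegral_abs_deriv_mul (s := univ) (f := Real.exp) (f' := Real.exp)
    MeasurableSet.univ (fun x _ => (Real.hasDerivAt_exp x).hasDerivWithinAt)
    Real.exp_injective.injOn (fun s => ENNReal.ofReal (k s))
  rw [image_univ, Real.range_exp] at this
  rw [this, Measure.restrict_univ]
  congr with p
  rw [ENNReal.ofReal_mul (Real.exp_pos p).le, abs_of_pos (Real.exp_pos p)]

/-- The functional Santaló inequality on the half-line: Prékopa–Leindler after the substitution
`s = exp p`, compared with the Gaussian. -/
lemma half_line_santalo {k l : ℝ → ℝ} (hk : Measurable k) (hl : Measurable l)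
    (k0 : ∀ x, 0 ≤ k x) (l0 : ∀ x, 0 ≤ l x)
    (kb : ∃ C, ∀ s, 0 < s → s * k s ≤ C) (lb : ∃ C, ∀ s, 0 < s → s * l s ≤ C) {M : ℝ} (hM : 0 < M)
    (H : ∀ s t, 0 < s → 0 < t → k s * l t ≤ M * Real.exp (-2 * (s * t))) :
    (∫⁻ s in Ioi (0 : ℝ), ENNReal.ofReal (k s)) * (∫⁻ s in Ioi (0 : ℝ), ENNReal.ofReal (l s)) ≤
      ENNReal.ofReal (M * (Real.pi / 4)) := by
  have hgauss : ∫⁻ p, ENNReal.ofReal (Real.exp p * Real.exp (-1 * Real.exp p ^ 2))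
      = ENNReal.ofReal (√Real.pi / 2) := by
    rw [← lintegral_Ioi_eq_exp (fun u => Real.exp (-1 * u ^ 2)),
      ← ofReal_integral_eq_lintegral_ofReal, integral_gaussian_Ioi]
    · simp
    · exact (integrable_exp_neg_mul_sq one_pos).integrableOn
    · exact Filter.Eventually.of_forall fun x => (Real.exp_pos _).le
  rw [lintegral_Ioi_eq_exp, lintegral_Ioi_eq_exp]
  refine (prekopa_leindler_quasiconcave (M := M)
    (h := fun p => Real.exp p * Real.exp (-1 * Real.exp p ^ 2))
    (by fun_prop) (by fun_prop) (by fun_prop)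
    (fun p => mul_nonneg (Real.exp_pos p).le (k0 _)) (fun p => mul_nonneg (Real.exp_pos p).le (l0 _))
    (fun p => by positivity) ?_ ?_ ?_ hM ?_).trans ?_
  · obtain ⟨C, hC⟩ := kb
    exact ⟨C, by rintro _ ⟨p, rfl⟩; exact hC _ (Real.exp_pos p)⟩
  · obtain ⟨C, hC⟩ := lb
    exact ⟨C, by rintro _ ⟨p, rfl⟩; exact hC _ (Real.exp_pos p)⟩
  · intro r
    have hc : ConcaveOn ℝ univ (fun p : ℝ => p + -Real.exp (2 * p)) := by
      refine (concaveOn_id convex_univ).add (ConvexOn.neg ?_)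
      have := convexOn_exp.comp_linearMap (LinearMap.mulLeft ℝ (2 : ℝ))
      exact this
    rcases le_or_gt r 0 with hr | hr
    · convert ordConnected_univ (α := ℝ)
      ext x
      simp only [mem_ofPred_eq, mem_univ, iff_true]
      exact hr.trans_lt (by positivity)
    · have := (hc.convex_gt (Real.log r)).ordConnected
      have e : {x | r < Real.exp x * Real.exp (-1 * Real.exp x ^ 2)} =
          {x | x ∈ univ ∧ Real.log r < x + -Real.exp (2 * x)} := by
        ext x
        simp only [mem_ofPred_eq, mem_univ, true_and]
        rw [Real.log_lt_iff_lt_exp hr, Real.exp_add, neg_one_mul, ← Real.exp_nat_mul]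
        norm_cast
      rwa [e]
  · intro p q
    have := H (Real.exp p) (Real.exp q) (Real.exp_pos p) (Real.exp_pos q)
    calc Real.exp p * k (Real.exp p) * (Real.exp q * l (Real.exp q))
        = (Real.exp p * Real.exp q) * (k (Real.exp p) * l (Real.exp q)) := by ring
      _ ≤ (Real.exp p * Real.exp q) * (M * Real.exp (-2 * (Real.exp p * Real.exp q))) := by gcongr
      _ = _ := by
        have e : Real.exp ((p + q) / 2) ^ 2 = Real.exp p * Real.exp q := by
          rw [← Real.exp_nat_mul, ← Real.exp_add]; congr 1; push_cast; ring
        rw [mul_pow, e, ← Real.exp_nat_mul _ 2]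
        push_cast; ring_nf
  · rw [hgauss, ← ENNReal.ofReal_pow (by positivity), ← ENNReal.ofReal_mul hM.le]
    apply le_of_eq; congr 2
    rw [div_pow, Real.sq_sqrt Real.pi_pos.le]; norm_num

/-! ### Half-spaces and shears -/

/-- Nonnegative, measurable, bounded functions vanishing outside a compact set: the class in which
the functional Santaló inequality is proved, where every integral below converges. -/
structure BCS {X : Type*} [TopologicalSpace X] [MeasurableSpace X] (f : X → ℝ) : Prop where
  meas : Measurable f
  nonneg : ∀ x, 0 ≤ f x
  bdd : ∃ C, 0 ≤ C ∧ ∀ x, f x ≤ C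
  supp : ∃ S, IsCompact S ∧ ∀ x, x ∉ S → f x = 0

namespace BCS

lemma integrable_mul {X : Type*} [TopologicalSpace X] [MeasurableSpace X] [BorelSpace X] [T2Space X]
    {μ : Measure X} [IsFiniteMeasureOnCompacts μ] {f φ : X → ℝ} (hf : BCS f) (hφ : Continuous φ) :
    Integrable (fun x => φ x * f x) μ := by
  obtain ⟨C, _, hC⟩ := hf.bdd
  obtain ⟨S, hS, hS'⟩ := hf.supp
  have h1 : IntegrableOn φ S μ := hφ.continuousOn.integrableOn_compact hS
  have h2 : IntegrableOn (fun x => φ x * f x) S μ :=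
    h1.mul_bdd (c := C) hf.meas.aestronglyMeasurable
      (Filter.Eventually.of_forall fun x => by
        rw [Real.norm_of_nonneg (hf.nonneg x)]; exact hC x)
  rwa [integrableOn_iff_integrable_of_support_subset] at h2
  intro x hx
  by_contra hxS
  exact hx (by simp [hS' x hxS])

lemma integrable {X : Type*} [TopologicalSpace X] [MeasurableSpace X] [BorelSpace X] [T2Space X]
    {μ : Measure X} [IsFiniteMeasureOnCompacts μ] {f : X → ℝ} (hf : BCS f) :
    Integrable f μ := by
  simpa using hf.integrable_mul (μ := μ) (φ := fun _ => 1) continuous_const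

lemma comp_homeomorph {X Y : Type*} [TopologicalSpace X] [MeasurableSpace X] [BorelSpace X]
    [TopologicalSpace Y] [MeasurableSpace Y] [BorelSpace Y] {f : Y → ℝ} (hf : BCS f) (T : X ≃ₜ Y) :
    BCS (fun x => f (T x)) := by
  obtain ⟨C, hC0, hC⟩ := hf.bdd
  obtain ⟨S, hS, hS'⟩ := hf.supp
  refine ⟨hf.meas.comp T.continuous.measurable, fun x => hf.nonneg _, ⟨C, hC0, fun x => hC _⟩,
    T.symm '' S, hS.image T.symm.continuous, fun x hx => hS' _ fun h => hx ⟨_, h, by simp⟩⟩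

lemma mul_continuous {X : Type*} [TopologicalSpace X] [MeasurableSpace X] [BorelSpace X]
    {f φ : X → ℝ} (hf : BCS f) (hφ : Continuous φ) (h0 : ∀ x, 0 ≤ φ x) :
    BCS (fun x => f x * φ x) := by
  obtain ⟨C, hC0, hC⟩ := hf.bdd
  obtain ⟨S, hS, hS'⟩ := hf.supp
  refine ⟨hf.meas.mul hφ.measurable, fun x => mul_nonneg (hf.nonneg _) (h0 x), ?_,
    S, hS, fun x hx => by simp [hS' x hx]⟩
  obtain ⟨B, hB⟩ := hS.bddAbove_image hφ.continuousOn
  refine ⟨C * |B|, by positivity, fun x => ?_⟩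
  by_cases hx : x ∈ S
  · have : φ x ≤ |B| := (hB ⟨x, hx, rfl⟩).trans (le_abs_self B)
    have := hC x
    have := h0 x
    gcongr
  · simp only [hS' x hx, zero_mul]; positivity

lemma slice {X : Type*} [TopologicalSpace X] [MeasurableSpace X] [BorelSpace X]
    [SecondCountableTopology X] {f : ℝ × X → ℝ} (hf : BCS f) (x : X) : BCS (fun s => f (s, x)) := by
  obtain ⟨C, hC0, hC⟩ := hf.bdd
  obtain ⟨S, hS, hS'⟩ := hf.supp
  refine ⟨hf.meas.comp measurable_prodMk_right, fun x => hf.nonneg _, ⟨C, hC0, fun x => hC _⟩,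
    Prod.fst '' S, hS.image continuous_fst, fun s hs => hS' _ fun h => hs ⟨_, h, rfl⟩⟩

lemma marginal {X : Type*} [TopologicalSpace X] [MeasurableSpace X] [BorelSpace X]
    [SecondCountableTopology X] {f : ℝ × X → ℝ} (hf : BCS f) (A : Set ℝ) :
    BCS (fun x => ∫ s in A, f (s, x)) := by
  obtain ⟨C, hC0, hC⟩ := hf.bdd
  obtain ⟨S, hS, hS'⟩ := hf.supp
  refine ⟨?_, fun x => integral_nonneg fun s => hf.nonneg _, ?_,
    Prod.snd '' S, hS.image continuous_snd, ?_⟩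
  · have : StronglyMeasurable (Function.uncurry fun (x : X) (s : ℝ) => f (s, x)) :=
      (hf.meas.comp measurable_swap).stronglyMeasurable
    exact this.integral_prod_right.measurable
  · have hS1 : IsCompact (Prod.fst '' S) := hS.image continuous_fst
    refine ⟨∫ s, (Prod.fst '' S).indicator (fun _ => C) s, ?_, fun x => ?_⟩
    · exact integral_nonneg fun s => indicator_nonneg (fun _ _ => hC0) s
    · calc ∫ s in A, f (s, x) ≤ ∫ s, f (s, x) :=
          setIntegral_le_integral (hf.slice x).integrable
            (Filter.Eventually.of_forall fun s => hf.nonneg _)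
        _ ≤ _ := by
          refine integral_mono (hf.slice x).integrable ?_ fun s => ?_
          · exact (integrable_indicator_iff hS1.measurableSet).2
              (integrableOn_const hS1.measure_lt_top.ne)
          · by_cases hs : s ∈ Prod.fst '' S
            · simp only [indicator_of_mem hs]; exact hC _
            · simp only [indicator_of_notMem hs]
              exact (hS' _ fun h => hs ⟨_, h, rfl⟩).le
  · intro x hx
    have : ∀ s, f (s, x) = 0 := fun s => hS' _ fun h => hx ⟨_, h, rfl⟩
    simp [this]

lemma const_mul {X : Type*} [TopologicalSpace X] [MeasurableSpace X] [BorelSpace X]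
    {f : X → ℝ} (hf : BCS f) {a : ℝ} (ha : 0 ≤ a) : BCS (fun x => a * f x) := by
  simpa [mul_comm] using hf.mul_continuous (φ := fun _ => a) continuous_const (fun _ => ha)

end BCS

/-- The functional Santaló inequality in dimension `n`, for a first function `f` with barycentre at
the origin. The constant is that of the Gaussian pair `f = g = exp (-|x|²)`. -/
def SantaloAt (n : ℕ) : Prop :=
  ∀ f g : (Fin n → ℝ) → ℝ, BCS f → BCS g → (∀ x y, f x * g y ≤ Real.exp (-2 * (x ⬝ᵥ y))) →
    (∀ i, ∫ x, x i * f x = 0) → (∫ x, f x) * (∫ x, g x) ≤ Real.pi ^ n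

lemma setIntegral_Ioi_prod {n : ℕ} {h : ℝ × (Fin n → ℝ) → ℝ} (hh : Integrable h) (A : Set ℝ) :
    ∫ p in A ×ˢ univ, h p = ∫ x, ∫ s in A, h (s, x) := by
  have : (volume : Measure (ℝ × (Fin n → ℝ))).restrict (A ×ˢ univ)
      = (volume.restrict A).prod volume := by
    rw [Measure.volume_eq_prod, ← Measure.prod_restrict, Measure.restrict_univ]
  have hi : Integrable h ((volume.restrict A).prod volume) := by
    rw [← this]; exact hh.integrableOn
  rw [this, integral_prod_symm _ hi]

/-- Santaló inequality on a half-space on which the `x`-barycentre of `f` vanishes: the half-line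
inequality bounds the product of the marginals, to which the inductive hypothesis applies. -/
lemma santalo_half {n : ℕ} (ih : SantaloAt n) {f g : ℝ × (Fin n → ℝ) → ℝ} (hf : BCS f) (hg : BCS g)
    (H : ∀ s t x y, 0 < s → 0 < t → f (s, x) * g (t, y) ≤ Real.exp (-2 * (s * t + x ⬝ᵥ y)))
    (hbar : ∀ i, ∫ p : ℝ × (Fin n → ℝ) in Ioi (0 : ℝ) ×ˢ univ, p.2 i * f p = 0) :
    (∫ p in Ioi (0 : ℝ) ×ˢ univ, f p) * (∫ p in Ioi (0 : ℝ) ×ˢ univ, g p)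
      ≤ Real.pi / 4 * Real.pi ^ n := by
  have hpi := Real.pi_pos
  set F : (Fin n → ℝ) → ℝ := fun x => ∫ s in Ioi 0, f (s, x) with hF
  set G : (Fin n → ℝ) → ℝ := fun x => ∫ s in Ioi 0, g (s, x) with hG
  have FB : BCS F := hf.marginal _
  have GB : BCS G := hg.marginal _
  have bd : ∀ {k : ℝ → ℝ}, BCS k → ∃ C, ∀ s, 0 < s → s * k s ≤ C := by
    intro k hk
    obtain ⟨C, -, hC⟩ := (hk.mul_continuous continuous_abs fun _ => abs_nonneg _).bdd
    exact ⟨C, fun s hs => by have := hC s; rwa [abs_of_pos hs, mul_comm] at this⟩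
  have FG : ∀ x y, F x * G y ≤ Real.pi / 4 * Real.exp (-2 * (x ⬝ᵥ y)) := by
    intro x y
    have fx := hf.slice x
    have gy := hg.slice y
    have := half_line_santalo fx.meas gy.meas fx.nonneg gy.nonneg (bd fx) (bd gy)
      (M := Real.exp (-2 * (x ⬝ᵥ y))) (Real.exp_pos _) (fun s t hs ht => by
        rw [← Real.exp_add]
        convert H s t x y hs ht using 2; ring)
    rw [← ofReal_integral_eq_lintegral_ofReal fx.integrable.integrableOn
      (Filter.Eventually.of_forall fx.nonneg),
      ← ofReal_integral_eq_lintegral_ofReal gy.integrable.integrableOn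
      (Filter.Eventually.of_forall gy.nonneg), ← ENNReal.ofReal_mul (FB.nonneg x),
      ENNReal.ofReal_le_ofReal_iff (by positivity)] at this
    rw [mul_comm (Real.pi / 4)]; exact this
  have key := ih (fun x => 4 / Real.pi * F x) G (FB.const_mul (by positivity)) GB
    (fun x y => by
      calc 4 / Real.pi * F x * G y = 4 / Real.pi * (F x * G y) := by ring
        _ ≤ 4 / Real.pi * (Real.pi / 4 * Real.exp (-2 * (x ⬝ᵥ y))) := by
            exact mul_le_mul_of_nonneg_left (FG x y) (by positivity)
        _ = _ := by field_simp)
    (fun i => by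
      have := hbar i
      rw [setIntegral_Ioi_prod (hf.integrable_mul (by fun_prop))] at this
      simp only [integral_const_mul] at this
      calc ∫ x : Fin n → ℝ, x i * (4 / Real.pi * F x) = 4 / Real.pi * ∫ x : Fin n → ℝ, x i * F x := by
            rw [← integral_const_mul]; congr with x; ring
        _ = 0 := by rw [this, mul_zero])
  rw [integral_const_mul] at key
  rw [setIntegral_Ioi_prod hf.integrable, setIntegral_Ioi_prod hg.integrable]
  change (∫ x, F x) * (∫ x, G x) ≤ _
  calc (∫ x, F x) * (∫ x, G x) = Real.pi / 4 * (4 / Real.pi * (∫ x, F x) * (∫ x, G x)) := by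
        field_simp
    _ ≤ _ := by gcongr

lemma exists_median {φ : ℝ → ℝ} (hφ : Integrable φ) (hpos : 0 < ∫ x, φ x) :
    ∃ c, ∫ x in Iio c, φ x = (∫ x, φ x) / 2 := by
  set T := ∫ x, φ x with hT
  have hc : Continuous fun c => ∫ x in Iic c, φ x := by
    have : (fun c => ∫ x in Iic c, φ x) = fun c => (∫ x in Iic (0:ℝ), φ x) + ∫ x in (0:ℝ)..c, φ x := by
      ext c
      rw [← intervalIntegral.integral_Iic_sub_Iic hφ.integrableOn hφ.integrableOn]; ring
    rw [this]
    exact continuous_const.add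
      (intervalIntegral.continuous_primitive (fun a b => hφ.intervalIntegrable) 0)
  have htop : Filter.Tendsto (fun c => ∫ x in Iic c, φ x) Filter.atTop (nhds T) :=
    (aecover_Iic Filter.tendsto_id).integral_tendsto_of_countably_generated hφ
  have hbot : Filter.Tendsto (fun c => ∫ x in Iic c, φ x) Filter.atBot (nhds 0) := by
    have h1 : Filter.Tendsto (fun c => ∫ x in Ioi c, φ x) Filter.atBot (nhds T) :=
      (aecover_Ioi Filter.tendsto_id).integral_tendsto_of_countably_generated hφ
    have : (fun c => ∫ x in Iic c, φ x) = fun c => T - ∫ x in Ioi c, φ x := by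
      ext c
      rw [hT, ← intervalIntegral.integral_Iic_add_Ioi (b := c) hφ.integrableOn hφ.integrableOn]; ring
    rw [this]
    simpa using h1.const_sub T
  obtain ⟨c, hc⟩ := mem_range_of_exists_le_of_exists_ge (c := T / 2) hc
    ((hbot.eventually_le_const (by linarith)).exists)
    ((htop.eventually_const_le (by linarith)).exists)
  exact ⟨c, by rw [← integral_Iic_eq_integral_Iio]; exact hc⟩

lemma integral_split {n : ℕ} {h : ℝ × (Fin n → ℝ) → ℝ} (hh : Integrable h) (c : ℝ) :
    ∫ p, h p = (∫ p in Ioi c ×ˢ univ, h p) + ∫ p in Iio c ×ˢ univ, h p := by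
  rw [← setIntegral_union _ (measurableSet_Iio.prod MeasurableSet.univ) hh.integrableOn
    hh.integrableOn, ← setIntegral_univ]
  · apply setIntegral_congr_set
    rw [← union_prod, Ioi_union_Iio]
    have : volume (({c} : Set ℝ) ×ˢ (univ : Set (Fin n → ℝ))) = 0 := by
      rw [Measure.volume_eq_prod, Measure.prod_prod]; simp
    refine Filter.EventuallyEq.symm (ae_eq_univ.2 ?_)
    convert this using 2
    ext p; simp
  · rw [Set.disjoint_left]
    rintro p ⟨h1, _⟩ ⟨h2, _⟩
    exact lt_asymm (mem_Ioi.1 h1) (mem_Iio.1 h2)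

/-- The volume-preserving affine map `(s, x) ↦ (c + s, ζ + s m + x)`, which moves the hyperplane
`s = 0` to `s = c` and the `s`-axis to the line through `(c, ζ)` with direction `(1, m)`. -/
def shear {n : ℕ} (c : ℝ) (ζ m : Fin n → ℝ) : (ℝ × (Fin n → ℝ)) ≃ₜ (ℝ × (Fin n → ℝ)) where
  toFun p := (c + p.1, (ζ + p.1 • m) + p.2)
  invFun p := (p.1 - c, p.2 - (ζ + (p.1 - c) • m))
  left_inv p := by ext <;> simp
  right_inv p := by ext <;> simp
  continuous_toFun := by fun_prop
  continuous_invFun := by fun_prop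

/-- The inverse transpose of the linear part of `shear c ζ m`: `(t, y) ↦ (t - m ⬝ y, y)`. -/
def dualShear {n : ℕ} (m : Fin n → ℝ) : (ℝ × (Fin n → ℝ)) ≃ₜ (ℝ × (Fin n → ℝ)) where
  toFun p := (-(m ⬝ᵥ p.2) + p.1, p.2)
  invFun p := ((m ⬝ᵥ p.2) + p.1, p.2)
  left_inv p := by ext <;> simp
  right_inv p := by ext <;> simp
  continuous_toFun := by unfold dotProduct; fun_prop
  continuous_invFun := by unfold dotProduct; fun_prop

/-- The reflection `(s, x) ↦ (-s, x)`. -/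
def reflFst (n : ℕ) : (ℝ × (Fin n → ℝ)) ≃ₜ (ℝ × (Fin n → ℝ)) :=
  (Homeomorph.neg ℝ).prodCongr (Homeomorph.refl _)

lemma measurePreserving_shear {n : ℕ} (c : ℝ) (ζ m : Fin n → ℝ) :
    MeasurePreserving (shear c ζ m) := by
  refine MeasurePreserving.skew_product (measurePreserving_add_left volume c)
    (g := fun s x => (ζ + s • m) + x) (by simp only [Function.uncurry_def]; fun_prop) ?_
  exact Filter.Eventually.of_forall fun s => (measurePreserving_add_left volume (ζ + s • m)).map_eq

lemma measurePreserving_dualShear {n : ℕ} (m : Fin n → ℝ) :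
    MeasurePreserving (dualShear m) := by
  have h1 : MeasurePreserving (fun p : (Fin n → ℝ) × ℝ => (p.1, -(m ⬝ᵥ p.1) + p.2)) := by
    refine MeasurePreserving.skew_product (MeasurePreserving.id volume)
      (g := fun y t => -(m ⬝ᵥ y) + t) (by simp only [Function.uncurry_def, dotProduct]; fun_prop) ?_
    exact Filter.Eventually.of_forall fun s =>
      (measurePreserving_add_left volume (-(m ⬝ᵥ s))).map_eq
  exact Measure.measurePreserving_swap.comp (h1.comp Measure.measurePreserving_swap)

lemma measurePreserving_reflFst (n : ℕ) : MeasurePreserving (reflFst n) :=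
  (Measure.measurePreserving_neg (volume : Measure ℝ)).prod (MeasurePreserving.id volume)

/-! ### The functional Santaló inequality -/

/-- Some shear of `f` has both half-spaces of equal mass, each with barycentre on the `s`-axis:
choose `c` by bisecting the mass, then the axis through the barycentres of the two halves. -/
lemma exists_balanced_shear {n : ℕ} {f : ℝ × (Fin n → ℝ) → ℝ} (hf : BCS f) (hpos : 0 < ∫ p, f p) :
    ∃ (c : ℝ) (ζ m : Fin n → ℝ),
      (∫ p in Ioi (0 : ℝ) ×ˢ univ, f (shear c ζ m p) = (∫ p, f p) / 2) ∧
      (∫ p in Iio (0 : ℝ) ×ˢ univ, f (shear c ζ m p) = (∫ p, f p) / 2) ∧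
      (∀ i, ∫ p : ℝ × (Fin n → ℝ) in Ioi (0 : ℝ) ×ˢ univ, p.2 i * f (shear c ζ m p) = 0) ∧
      (∀ i, ∫ p : ℝ × (Fin n → ℝ) in Iio (0 : ℝ) ×ˢ univ, p.2 i * f (shear c ζ m p) = 0) := by
  have hfi : Integrable f := hf.integrable
  have hfi' : Integrable f (volume.prod volume) := hfi
  set T := ∫ p, f p with hT
  obtain ⟨c, hc⟩ : ∃ c, ∫ p in Iio c ×ˢ univ, f p = T / 2 := by
    have e : ∫ s, ∫ x, f (s, x) = T := (integral_prod f hfi').symm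
    obtain ⟨c, hc⟩ := exists_median (φ := fun s => ∫ x, f (s, x)) hfi'.integral_prod_left
      (by rw [e]; exact hpos)
    refine ⟨c, ?_⟩
    rw [e] at hc
    rw [← hc, Measure.volume_eq_prod, setIntegral_prod f hfi'.integrableOn]
    simp
  have hc' : ∫ p in Ioi c ×ˢ univ, f p = T / 2 := by
    have := integral_split hfi c
    rw [hc] at this; linarith
  -- first moments of the two halves
  set D₁ := ∫ p : ℝ × (Fin n → ℝ) in Ioi c ×ˢ univ, (p.1 - c) * f p with hD₁
  set D₂ := ∫ p : ℝ × (Fin n → ℝ) in Iio c ×ˢ univ, (p.1 - c) * f p with hD₂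
  set X₁ : Fin n → ℝ := fun i => ∫ p : ℝ × (Fin n → ℝ) in Ioi c ×ˢ univ, p.2 i * f p with hX₁
  set X₂ : Fin n → ℝ := fun i => ∫ p : ℝ × (Fin n → ℝ) in Iio c ×ˢ univ, p.2 i * f p with hX₂
  have hms : MeasurableSet (Ioi c ×ˢ (univ : Set (Fin n → ℝ))) :=
    measurableSet_Ioi.prod MeasurableSet.univ
  have hms' : MeasurableSet (Iio c ×ˢ (univ : Set (Fin n → ℝ))) :=
    measurableSet_Iio.prod MeasurableSet.univ
  have hD₁0 : 0 < D₁ := by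
    have hnn : ∀ p ∈ Ioi c ×ˢ (univ : Set (Fin n → ℝ)), 0 ≤ (p.1 - c) * f p := fun p hp =>
      mul_nonneg (sub_nonneg.2 (mem_Ioi.1 hp.1).le) (hf.nonneg p)
    refine lt_of_le_of_ne (setIntegral_nonneg hms hnn) fun h0 => ?_
    have hz := (setIntegral_eq_zero_iff_of_nonneg_ae (ae_restrict_of_forall_mem hms hnn)
      (hf.integrable_mul (by fun_prop)).integrableOn).1 h0.symm
    have : ∫ p in Ioi c ×ˢ univ, f p = 0 := by
      refine integral_eq_zero_of_ae ?_
      filter_upwards [hz, ae_restrict_mem hms] with p hp hpm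
      have hne : p.1 - c ≠ 0 := (sub_pos.2 (mem_Ioi.1 hpm.1)).ne'
      exact (mul_eq_zero.1 hp).resolve_left hne
    linarith
  have hD₂0 : D₂ ≤ 0 := setIntegral_nonpos hms' fun p hp =>
    mul_nonpos_of_nonpos_of_nonneg (sub_nonpos.2 (mem_Iio.1 hp.1).le) (hf.nonneg p)
  -- slope and base point of the line through the barycentres of the two halves
  have hD : D₁ - D₂ ≠ 0 := by linarith
  set m : Fin n → ℝ := fun i => (X₁ i - X₂ i) / (D₁ - D₂) with hm
  set ζ : Fin n → ℝ := fun i => (X₁ i - m i * D₁) / (T / 2) with hζ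
  have hmi : ∀ i, m i * (D₁ - D₂) = X₁ i - X₂ i := fun i => by rw [hm]; field_simp
  have hζi : ∀ i, ζ i * (T / 2) = X₁ i - m i * D₁ := fun i => by rw [hζ]; field_simp
  have htr : ∀ (A B : Set ℝ) (_ : ∀ s, s ∈ A ↔ c + s ∈ B) (h : ℝ × (Fin n → ℝ) → ℝ),
      ∫ p in A ×ˢ univ, h (shear c ζ m p) = ∫ p in B ×ˢ univ, h p := by
    intro A B hAB h
    have e : A ×ˢ (univ : Set (Fin n → ℝ)) = shear c ζ m ⁻¹' (B ×ˢ univ) := by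
      ext p
      simp [shear, hAB]
    rw [e, (measurePreserving_shear c ζ m).setIntegral_preimage_emb
      (shear c ζ m).measurableEmbedding]
  have hI : ∀ s : ℝ, s ∈ Ioi (0 : ℝ) ↔ c + s ∈ Ioi c := fun s => by simp
  have hI' : ∀ s : ℝ, s ∈ Iio (0 : ℝ) ↔ c + s ∈ Iio c := fun s => by simp
  have hmom : ∀ (A B : Set ℝ) (_ : ∀ s, s ∈ A ↔ c + s ∈ B) (i : Fin n),
      ∫ p : ℝ × (Fin n → ℝ) in A ×ˢ univ, p.2 i * f (shear c ζ m p)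
        = (∫ p : ℝ × (Fin n → ℝ) in B ×ˢ univ, p.2 i * f p) - ζ i * (∫ p in B ×ˢ univ, f p)
          - m i * ∫ p : ℝ × (Fin n → ℝ) in B ×ˢ univ, (p.1 - c) * f p := by
    intro A B hAB i
    have := htr A B hAB (fun p => (p.2 i * f p - ζ i * f p) - m i * ((p.1 - c) * f p))
    have i1 : Integrable (fun p : ℝ × (Fin n → ℝ) => p.2 i * f p) :=
      hf.integrable_mul (by fun_prop)
    have i2 : Integrable (fun p : ℝ × (Fin n → ℝ) => (p.1 - c) * f p) :=
      hf.integrable_mul (by fun_prop)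
    have i3 : Integrable (fun p : ℝ × (Fin n → ℝ) => p.2 i * f p - ζ i * f p) :=
      i1.sub (hfi.const_mul _)
    rw [integral_sub i3.integrableOn (i2.integrableOn.const_mul _),
      integral_sub i1.integrableOn (hfi.integrableOn.const_mul _),
      integral_const_mul, integral_const_mul] at this
    rw [← this]
    congr with p
    simp only [shear, Homeomorph.homeomorph_mk_coe, Equiv.coe_fn_mk, Pi.add_apply, Pi.smul_apply,
      smul_eq_mul]
    ring
  refine ⟨c, ζ, m, ?_, ?_, fun i => ?_, fun i => ?_⟩
  · rw [htr _ _ hI, hc']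
  · rw [htr _ _ hI', hc]
  · rw [hmom _ _ hI, hc']
    linear_combination - hζi i
  · rw [hmom _ _ hI', hc]
    linear_combination - hζi i + hmi i

lemma setIntegral_reflFst {n : ℕ} (h : ℝ × (Fin n → ℝ) → ℝ) :
    ∫ p in Ioi (0 : ℝ) ×ˢ univ, h (reflFst n p) = ∫ p in Iio (0 : ℝ) ×ˢ univ, h p := by
  have e : Ioi (0 : ℝ) ×ˢ (univ : Set (Fin n → ℝ)) = reflFst n ⁻¹' (Iio 0 ×ˢ univ) := by
    ext p
    simp [reflFst]
  rw [e, (measurePreserving_reflFst n).setIntegral_preimage_emb (reflFst n).measurableEmbedding]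

/-- Inductive step of the functional Santaló inequality. Here it is `g` that is centred; `f` is put
in balanced position, `g` is transformed dually, and the half-space inequality is applied on both
sides. -/
lemma santalo_step_prod {n : ℕ} (ih : SantaloAt n) {f g : ℝ × (Fin n → ℝ) → ℝ} (hf : BCS f)
    (hg : BCS g)
    (H : ∀ p q, f p * g q ≤ Real.exp (-2 * (p.1 * q.1 + p.2 ⬝ᵥ q.2)))
    (hb0 : ∫ q : ℝ × (Fin n → ℝ), q.1 * g q = 0)
    (hb : ∀ i, ∫ q : ℝ × (Fin n → ℝ), q.2 i * g q = 0) :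
    (∫ p, f p) * (∫ p, g p) ≤ Real.pi ^ (n + 1) := by
  have hT0 : 0 ≤ ∫ p, f p := integral_nonneg hf.nonneg
  rcases hT0.eq_or_lt with hT | hT
  · rw [← hT, zero_mul]; positivity
  obtain ⟨c, ζ, m, h1, h2, h3, h4⟩ := exists_balanced_shear hf hT
  set E : ℝ × (Fin n → ℝ) → ℝ := fun q => Real.exp (2 * (c * q.1 + ζ ⬝ᵥ q.2)) with hE
  have hEc : Continuous E := by simp only [hE, dotProduct]; fun_prop
  set f' : ℝ × (Fin n → ℝ) → ℝ := fun p => f (shear c ζ m p) with hf'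
  set g₀ : ℝ × (Fin n → ℝ) → ℝ := fun q => g q * E q with hg₀
  set g' : ℝ × (Fin n → ℝ) → ℝ := fun q => g₀ (dualShear m q) with hg'
  have Bf' : BCS f' := hf.comp_homeomorph _
  have Bg₀ : BCS g₀ := hg.mul_continuous hEc fun q => (Real.exp_pos _).le
  have Bg' : BCS g' := Bg₀.comp_homeomorph _
  have H' : ∀ s t x y, f' (s, x) * g' (t, y) ≤ Real.exp (-2 * (s * t + x ⬝ᵥ y)) := by
    intro s t x y
    have := H (shear c ζ m (s, x)) (dualShear m (t, y))
    calc f' (s, x) * g' (t, y)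
        = (f (shear c ζ m (s, x)) * g (dualShear m (t, y))) * E (dualShear m (t, y)) := by
          simp only [hf', hg', hg₀]; ring
      _ ≤ _ := mul_le_mul_of_nonneg_right this (Real.exp_pos _).le
      _ = _ := by
        rw [hE, ← Real.exp_add]
        congr 1
        simp only [shear, dualShear, Homeomorph.homeomorph_mk_coe, Equiv.coe_fn_mk,
          add_dotProduct, smul_dotProduct, smul_eq_mul]
        ring
  have key1 := santalo_half ih Bf' Bg' (fun s t x y _ _ => H' s t x y) h3
  have key2 := santalo_half ih (Bf'.comp_homeomorph (reflFst n)) (Bg'.comp_homeomorph (reflFst n))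
    (fun s t x y _ _ => by
      have := H' (-s) (-t) x y
      rwa [neg_mul_neg] at this)
    (fun i => by
      have := setIntegral_reflFst (fun p : ℝ × (Fin n → ℝ) => p.2 i * f' p)
      rw [h4 i] at this
      exact this)
  rw [setIntegral_reflFst, setIntegral_reflFst] at key2
  rw [h1] at key1
  rw [h2] at key2
  have hsplit := integral_split (Bg'.integrable (μ := volume)) 0
  have hg'int : ∫ q, g' q = ∫ q, g₀ q :=
    (measurePreserving_dualShear m).integral_comp (dualShear m).measurableEmbedding g₀
  -- since `g` is centred, the exponential tilt `E` can only increase its integral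
  have hjensen : ∫ q, g q ≤ ∫ q, g₀ q := by
    have hL : Continuous fun q : ℝ × (Fin n → ℝ) => 2 * (c * q.1 + ζ ⬝ᵥ q.2) := by
      simp only [dotProduct]; fun_prop
    have e0 : ∫ q : ℝ × (Fin n → ℝ), (2 * (c * q.1 + ζ ⬝ᵥ q.2)) * g q = 0 := by
      have : ∀ q : ℝ × (Fin n → ℝ), (2 * (c * q.1 + ζ ⬝ᵥ q.2)) * g q
          = 2 * c * (q.1 * g q) + ∑ i, 2 * ζ i * (q.2 i * g q) := by
        intro q
        simp only [dotProduct]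
        rw [mul_add, add_mul, Finset.mul_sum, Finset.sum_mul]
        congr 1
        · ring
        · exact Finset.sum_congr rfl fun i _ => by ring
      simp only [this]
      have i1 : ∀ i, Integrable fun q : ℝ × (Fin n → ℝ) => 2 * ζ i * (q.2 i * g q) := fun i =>
        (hg.integrable_mul (by fun_prop)).const_mul _
      rw [integral_add ((hg.integrable_mul continuous_fst).const_mul _)
        (integrable_finsetSum _ fun i _ => i1 i), integral_finsetSum _ fun i _ => i1 i,
        integral_const_mul, hb0]
      simp only [integral_const_mul, hb]
      simp
    calc ∫ q, g q = ∫ q, (g q + (2 * (c * q.1 + ζ ⬝ᵥ q.2)) * g q) := by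
          rw [integral_add hg.integrable (hg.integrable_mul hL), e0, add_zero]
      _ ≤ _ := by
        refine integral_mono (hg.integrable.add (hg.integrable_mul hL)) Bg₀.integrable fun q => ?_
        have := Real.add_one_le_exp (2 * (c * q.1 + ζ ⬝ᵥ q.2))
        have := mul_le_mul_of_nonneg_left this (hg.nonneg q)
        simp only [hg₀, hE]
        linarith
  calc (∫ p, f p) * (∫ p, g p) ≤ (∫ p, f p) * ∫ q, g' q := by
        rw [hg'int]; gcongr
    _ ≤ _ := by rw [hsplit, pow_succ]; linarith

lemma santalo_zero : SantaloAt 0 := by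
  intro f g hf hg H _
  have := H 0 0
  rw [Measure.volume_pi_eq_dirac (0 : Fin 0 → ℝ)]
  simpa using this

/-- The identification `ℝ × ℝⁿ ≃ ℝⁿ⁺¹` splitting off the first coordinate. -/
def consHomeo (n : ℕ) : (ℝ × (Fin n → ℝ)) ≃ₜ (Fin (n + 1) → ℝ) where
  toFun p := Fin.cons p.1 p.2
  invFun x := (x 0, Fin.tail x)
  left_inv p := by simp
  right_inv x := by simp
  continuous_toFun := by
    refine continuous_pi fun i => ?_
    refine Fin.cases ?_ (fun j => ?_) i
    · simpa using continuous_fst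
    · simp only [Fin.cons_succ]; fun_prop
  continuous_invFun := by unfold Fin.tail; fun_prop

lemma measurePreserving_consHomeo (n : ℕ) : MeasurePreserving (consHomeo n) := by
  have := (volume_preserving_piFinSuccAbove (fun _ : Fin (n + 1) => ℝ) 0).symm
  convert this using 1
  ext p i
  simp [consHomeo, MeasurableEquiv.piFinSuccAbove]

/-- The functional Santaló inequality, by Lehec's induction on the dimension. -/
lemma santaloAt (n : ℕ) : SantaloAt n := by
  induction n with
  | zero => exact santalo_zero
  | succ n ih =>
    intro f g hf hg H hb
    have hmp := measurePreserving_consHomeo n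
    have hme := (consHomeo n).measurableEmbedding
    have tr : ∀ h : (Fin (n + 1) → ℝ) → ℝ, ∫ p, h (consHomeo n p) = ∫ x, h x :=
      fun h => hmp.integral_comp hme h
    rw [mul_comm, ← tr f, ← tr g]
    refine santalo_step_prod ih (hg.comp_homeomorph _) (hf.comp_homeomorph _) ?_ ?_ ?_
    · intro p q
      have := H (consHomeo n q) (consHomeo n p)
      rw [mul_comm]
      refine this.trans (le_of_eq ?_)
      congr 2
      simp only [dotProduct, Fin.sum_univ_succ, consHomeo, Homeomorph.homeomorph_mk_coe,
        Equiv.coe_fn_mk, Fin.cons_zero, Fin.cons_succ, mul_comm]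
    · have := hb 0
      rw [← tr] at this
      simpa [consHomeo] using this
    · intro i
      have := hb i.succ
      rw [← tr] at this
      simpa [consHomeo] using this

/-! ### The Blaschke–Santaló inequality -/

/-- The functional Santaló inequality for `exp (-p²)` and `exp (-q²)` with `p` even, obtained by
truncating to large balls. -/
lemma integral_exp_mul_integral_exp_le {n : ℕ} {p q : EuclideanSpace ℝ (Fin n) → ℝ}
    (hp : Continuous p) (hq : Continuous q) (hpe : ∀ x, p (-x) = p x)
    (hpq : ∀ x y, |⟪x, y⟫| ≤ p x * q y) :
    (∫ x, Real.exp (-(p x) ^ 2)) * (∫ x, Real.exp (-(q x) ^ 2)) ≤ Real.pi ^ n := by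
  by_cases hip : Integrable (fun x => Real.exp (-(p x) ^ 2))
  swap
  · rw [integral_undef hip, zero_mul]; positivity
  by_cases hiq : Integrable (fun x => Real.exp (-(q x) ^ 2))
  swap
  · rw [integral_undef hiq, mul_zero]; positivity
  have tend : ∀ {r : EuclideanSpace ℝ (Fin n) → ℝ}, Integrable r →
      Filter.Tendsto (fun N : ℕ => ∫ x in closedBall 0 (N : ℝ), r x) Filter.atTop
        (nhds (∫ x, r x)) := fun hr =>
    (aecover_closedBall tendsto_natCast_atTop_atTop).integral_tendsto_of_countably_generated hr
  refine le_of_tendsto ((tend hip).mul (tend hiq)) (Filter.Eventually.of_forall fun N => ?_)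
  set L : (Fin n → ℝ) ≃ₜ EuclideanSpace ℝ (Fin n) :=
    (EuclideanSpace.equiv (Fin n) ℝ).symm.toHomeomorph with hL
  have hmpL : MeasurePreserving L := PiLp.volume_preserving_toLp (Fin n)
  have tr : ∀ h : EuclideanSpace ℝ (Fin n) → ℝ, ∫ x, h (L x) = ∫ x, h x :=
    fun h => hmpL.integral_comp L.measurableEmbedding h
  have trunc : ∀ {r : EuclideanSpace ℝ (Fin n) → ℝ}, Continuous r →
      BCS ((closedBall 0 (N : ℝ)).indicator fun x => Real.exp (-(r x) ^ 2)) := by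
    intro r hr
    refine ⟨(by fun_prop : Measurable fun x => Real.exp (-(r x) ^ 2)).indicator
      measurableSet_closedBall, fun x => indicator_nonneg (fun _ _ => (Real.exp_pos _).le) x,
      ⟨1, zero_le_one, fun x => ?_⟩, closedBall 0 N, isCompact_closedBall _ _,
      fun x hx => indicator_of_notMem hx _⟩
    refine indicator_apply_le' (fun _ => ?_) (fun _ => zero_le_one)
    exact Real.exp_le_one_iff.2 (by nlinarith [sq_nonneg (r x)])
  rw [← integral_indicator measurableSet_closedBall, ← integral_indicator measurableSet_closedBall,
    ← tr, ← tr]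
  refine santaloAt n _ _ ((trunc hp).comp_homeomorph L) ((trunc hq).comp_homeomorph L) ?_ ?_
  · intro x y
    have hin : ⟪L x, L y⟫ = x ⬝ᵥ y := by
      simp [hL, PiLp.inner_apply, dotProduct, mul_comm]
    have h1 : ∀ {r : EuclideanSpace ℝ (Fin n) → ℝ} (z : EuclideanSpace ℝ (Fin n)),
        (closedBall 0 (N : ℝ)).indicator (fun x => Real.exp (-(r x) ^ 2)) z
          ≤ Real.exp (-(r z) ^ 2) := fun z => indicator_le_self' (fun _ _ => (Real.exp_pos _).le) z
    calc _ ≤ Real.exp (-(p (L x)) ^ 2) * Real.exp (-(q (L y)) ^ 2) :=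
          mul_le_mul (h1 _) (h1 _) ((trunc hq).nonneg _) (Real.exp_pos _).le
      _ ≤ _ := by
        rw [← Real.exp_add, Real.exp_le_exp, ← hin]
        nlinarith [hpq (L x) (L y), le_abs_self ⟪L x, L y⟫, sq_nonneg (p (L x) - q (L y))]
  · intro i
    -- the integrand is odd because `p` is even and the ball is symmetric
    set G : (Fin n → ℝ) → ℝ := fun x =>
      x i * (closedBall 0 (N : ℝ)).indicator (fun x => Real.exp (-(p x) ^ 2)) (L x) with hG
    have hodd : ∀ x, G (-x) = -G x := by
      intro x
      have hLn : L (-x) = -L x := by simp [hL]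
      simp only [hG, hLn, indicator, mem_closedBall, dist_zero_right, norm_neg, hpe, Pi.neg_apply]
      ring
    have := integral_neg_eq_self G volume
    simp only [hodd, integral_neg] at this
    change ∫ x, G x = 0
    linarith

/-- The polar body of `A ∪ -A`. -/
def absPolar {n : ℕ} (A : Set (EuclideanSpace ℝ (Fin n))) : Set (EuclideanSpace ℝ (Fin n)) :=
  {x | ∀ y ∈ A, |⟪x, y⟫| ≤ 1}

/-- The support function of `A ∪ -A`: `x ↦ sup {|⟪x, y⟫| : y ∈ A}`, used only for bounded
nonempty `A`, so that the supremum is a genuine one. -/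
def absSupport {n : ℕ} (A : Set (EuclideanSpace ℝ (Fin n))) (x : EuclideanSpace ℝ (Fin n)) : ℝ :=
  sSup ((fun y => |⟪x, y⟫|) '' A)

section Support
variable {n : ℕ} {A : Set (EuclideanSpace ℝ (Fin n))} {ε R : ℝ}

lemma abs_inner_le_absSupport (hR : A ⊆ closedBall 0 R) (x : EuclideanSpace ℝ (Fin n))
    {y : EuclideanSpace ℝ (Fin n)} (hy : y ∈ A) : |⟪x, y⟫| ≤ absSupport A x := by
  refine le_csSup ⟨‖x‖ * R, ?_⟩ ⟨y, hy, rfl⟩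
  rintro _ ⟨z, hz, rfl⟩
  exact (abs_real_inner_le_norm x z).trans
    (mul_le_mul_of_nonneg_left (by simpa using hR hz) (norm_nonneg _))

lemma absSupport_le (hA : A.Nonempty) {x : EuclideanSpace ℝ (Fin n)} {c : ℝ}
    (h : ∀ y ∈ A, |⟪x, y⟫| ≤ c) : absSupport A x ≤ c :=
  csSup_le (hA.image _) (by rintro _ ⟨z, hz, rfl⟩; exact h z hz)

lemma absSupport_zero (hA : A.Nonempty) : absSupport A 0 = 0 := by
  simp only [absSupport, inner_zero_left, abs_zero, hA.image_const, csSup_singleton]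

lemma absSupport_neg (x : EuclideanSpace ℝ (Fin n)) : absSupport A (-x) = absSupport A x := by
  simp only [absSupport, inner_neg_left, abs_neg]

lemma absSupport_add (hA : A.Nonempty) (hR : A ⊆ closedBall 0 R) (x y : EuclideanSpace ℝ (Fin n)) :
    absSupport A (x + y) ≤ absSupport A x + absSupport A y := by
  refine absSupport_le hA fun z hz => ?_
  rw [inner_add_left]
  exact (abs_add_le _ _).trans
    (add_le_add (abs_inner_le_absSupport hR x hz) (abs_inner_le_absSupport hR y hz))

lemma absSupport_smul (hA : A.Nonempty) (hR : A ⊆ closedBall 0 R) (r : ℝ)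
    (x : EuclideanSpace ℝ (Fin n)) : absSupport A (r • x) ≤ |r| * absSupport A x := by
  refine absSupport_le hA fun z hz => ?_
  rw [real_inner_smul_left, abs_mul]
  exact mul_le_mul_of_nonneg_left (abs_inner_le_absSupport hR x hz) (abs_nonneg _)

lemma le_absSupport (hε0 : 0 ≤ ε) (hε : closedBall 0 ε ⊆ A) (hR : A ⊆ closedBall 0 R)
    (x : EuclideanSpace ℝ (Fin n)) : ε * ‖x‖ ≤ absSupport A x := by
  rcases eq_or_ne x 0 with rfl | hx
  · rw [absSupport_zero ⟨0, hε (by simpa using hε0)⟩]; simp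
  have hx' : ‖x‖ ≠ 0 := norm_ne_zero_iff.2 hx
  have : (ε / ‖x‖) • x ∈ A := hε (by
    rw [mem_closedBall_zero_iff, norm_smul, Real.norm_of_nonneg (by positivity)]
    exact le_of_eq (by field_simp))
  refine le_trans (le_of_eq ?_) (abs_inner_le_absSupport hR x this)
  rw [real_inner_smul_right, real_inner_self_eq_norm_sq, abs_of_nonneg (by positivity)]
  field_simp

lemma absSupport_le_mul_norm (hA : A.Nonempty) (hR : A ⊆ closedBall 0 R)
    (x : EuclideanSpace ℝ (Fin n)) : absSupport A x ≤ R * ‖x‖ := by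
  refine absSupport_le hA fun z hz => ?_
  rw [mul_comm]
  exact (abs_real_inner_le_norm x z).trans
    (mul_le_mul_of_nonneg_left (by simpa using hR hz) (norm_nonneg _))

lemma continuous_absSupport (hA : A.Nonempty) (hR : A ⊆ closedBall 0 R) :
    Continuous (absSupport A) := by
  have hR0 : 0 ≤ R := by
    obtain ⟨z, hz⟩ := hA
    exact (norm_nonneg z).trans (by simpa using hR hz)
  refine (LipschitzWith.of_le_add_mul ⟨R, hR0⟩ fun x y => ?_).continuous
  have h1 := absSupport_add hA hR y (x - y)
  have h2 := absSupport_le_mul_norm hA hR (x - y)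
  rw [add_sub_cancel] at h1
  rw [dist_eq_norm]
  exact h1.trans (add_le_add le_rfl h2)

lemma absPolar_eq (hA : A.Nonempty) (hR : A ⊆ closedBall 0 R) :
    absPolar A = {x | absSupport A x ≤ 1} := by
  ext x
  exact ⟨fun h => absSupport_le hA h, fun h y hy => (abs_inner_le_absSupport hR x hy).trans h⟩

lemma absPolar_subset (hε0 : 0 < ε) (hε : closedBall 0 ε ⊆ A) (hR : A ⊆ closedBall 0 R) :
    absPolar A ⊆ closedBall 0 (1 / ε) := by
  intro x hx
  rw [absPolar_eq ⟨0, hε (by simpa using hε0.le)⟩ hR] at hx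
  have h1 : absSupport A x ≤ 1 := hx
  have := le_absSupport hε0.le hε hR x
  rw [mem_closedBall_zero_iff, le_div_iff₀ hε0]
  linarith

lemma subset_absPolar (hR0 : 0 < R) (hR : A ⊆ closedBall 0 R) :
    closedBall 0 (1 / R) ⊆ absPolar A := by
  intro x hx y hy
  have h1 := hR hy
  rw [mem_closedBall_zero_iff] at h1 hx
  calc |⟪x, y⟫| ≤ ‖x‖ * ‖y‖ := abs_real_inner_le_norm x y
    _ ≤ 1 / R * R := by gcongr
    _ = 1 := by field_simp

/-- The Blaschke–Santaló inequality for the symmetric polar of a bounded neighbourhood `A` of the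
origin. The volume of a unit ball `{p ≤ 1}` of a norm is `(∫ exp (-p²)) / Γ(1 + n/2)`, and `A` lies
in the unit ball of the support function of its polar. -/
theorem blaschke_santalo (hn : 0 < n) (hε0 : 0 < ε) (hε : closedBall 0 ε ⊆ A)
    (hR : A ⊆ closedBall 0 R) :
    volume A * volume (absPolar A) ≤ ENNReal.ofReal (omegaVol n ^ 2) := by
  have : Nonempty (Fin n) := ⟨⟨0, hn⟩⟩
  have hR0 : 0 < R := by
    obtain ⟨u, hu⟩ := exists_norm_eq (EuclideanSpace ℝ (Fin n)) hε0.le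
    have := hR (hε (show u ∈ closedBall 0 ε by simp [hu]))
    rw [mem_closedBall_zero_iff, hu] at this
    linarith
  have hA : A.Nonempty := ⟨0, hε (by simpa using hε0.le)⟩
  set B := absPolar A with hBdef
  have hB1 : B ⊆ closedBall 0 (1 / ε) := absPolar_subset hε0 hε hR
  have hB2 : closedBall 0 (1 / R) ⊆ B := subset_absPolar hR0 hR
  have hB : B.Nonempty := ⟨0, hB2 (by simpa using hR0.le)⟩
  set q := absSupport A with hq
  set p := absSupport B with hp
  have hAp : A ⊆ {x | p x ≤ 1} := fun x hx => absSupport_le hB fun y hy => by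
    rw [real_inner_comm]; exact hy x hx
  have hpq : ∀ x y, |⟪x, y⟫| ≤ p x * q y := by
    intro x y
    rcases eq_or_ne y 0 with rfl | hy
    · simp [hq, absSupport_zero hA]
    have hqy : 0 < q y := lt_of_lt_of_le (mul_pos hε0 (norm_pos_iff.2 hy))
      (le_absSupport hε0.le hε hR y)
    have hyB : (q y)⁻¹ • y ∈ B := by
      intro z hz
      rw [real_inner_smul_left, abs_mul, abs_of_pos (inv_pos.2 hqy), inv_mul_le_iff₀ hqy, mul_one]
      exact abs_inner_le_absSupport hR y hz
    have := abs_inner_le_absSupport hB1 x hyB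
    rw [real_inner_smul_right, abs_mul, abs_of_pos (inv_pos.2 hqy), inv_mul_le_iff₀ hqy] at this
    linarith
  have vol : ∀ {C : Set (EuclideanSpace ℝ (Fin n))} {δ S : ℝ} (_ : 0 < δ) (_ : closedBall 0 δ ⊆ C)
      (_ : C ⊆ closedBall 0 S), volume {x | absSupport C x ≤ 1} = ENNReal.ofReal
        ((∫ x, Real.exp (-(absSupport C x) ^ 2)) / Real.Gamma (1 + n / 2)) := by
    intro C δ S hδ hδC hS
    have hC : C.Nonempty := ⟨0, hδC (by simpa using hδ.le)⟩
    have h4 : ∀ {x}, absSupport C x = 0 → x = 0 := fun {x} hx => by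
      have := le_absSupport hδ.le hδC hS x
      rw [hx] at this
      exact norm_le_zero_iff.1 (by nlinarith [norm_nonneg x])
    rw [measure_le_eq_lt volume (absSupport_zero hC) absSupport_neg (absSupport_add hC hS) h4
      (absSupport_smul hC hS), measure_lt_one_eq_integral_div_gamma volume (absSupport_zero hC)
      absSupport_neg (absSupport_add hC hS) h4 (absSupport_smul hC hS) (p := 2) two_pos]
    simp [add_comm]
  have hΓ : 0 < Real.Gamma (1 + (n : ℝ) / 2) := Real.Gamma_pos_of_pos (by positivity)
  calc volume A * volume B ≤ volume {x | p x ≤ 1} * volume {x | q x ≤ 1} :=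
        mul_le_mul' (measure_mono hAp) (by rw [hBdef, absPolar_eq hA hR])
    _ = ENNReal.ofReal (((∫ x, Real.exp (-(p x) ^ 2)) * (∫ x, Real.exp (-(q x) ^ 2))) /
          Real.Gamma (1 + n / 2) ^ 2) := by
        rw [vol (by positivity) hB2 hB1, vol hε0 hε hR, ← ENNReal.ofReal_mul]
        · congr 1; ring
        · exact div_nonneg (integral_nonneg fun x => (Real.exp_pos _).le) hΓ.le
    _ ≤ _ := by
        apply ENNReal.ofReal_le_ofReal
        rw [omegaVol, div_pow, ← Real.rpow_natCast (Real.pi ^ ((n : ℝ) / 2)) 2,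
          ← Real.rpow_mul Real.pi_pos.le]
        rw [show (n : ℝ) / 2 * (2 : ℕ) = n by push_cast; ring, Real.rpow_natCast]
        gcongr
        exact integral_exp_mul_integral_exp_le (continuous_absSupport hB hB1)
          (continuous_absSupport hA hR) absSupport_neg hpq

end Support

/-! ### Averaging over the orthogonal group -/

/-- The orthogonal group of `ℝⁿ`, as a topological group of continuous linear maps. -/
abbrev OrthGroup (n : ℕ) : Type :=
  unitary (EuclideanSpace ℝ (Fin n) →L[ℝ] EuclideanSpace ℝ (Fin n))

section Rotation
variable {n : ℕ}

instance continuousStar_clm :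
    ContinuousStar (EuclideanSpace ℝ (Fin n) →L[ℝ] EuclideanSpace ℝ (Fin n)) :=
  ⟨ContinuousLinearMap.adjoint.continuous⟩

instance orthGroup_isTopologicalGroup : IsTopologicalGroup (OrthGroup n) := inferInstance

instance orthGroup_compactSpace : CompactSpace (OrthGroup n) := by
  have : ProperSpace (EuclideanSpace ℝ (Fin n) →L[ℝ] EuclideanSpace ℝ (Fin n)) :=
    FiniteDimensional.proper ℝ _
  refine isCompact_iff_compactSpace.1 (Metric.isCompact_of_isClosed_isBounded isClosed_unitary
    ((Metric.isBounded_closedBall (x := 0) (r := 1)).subset fun g hg => ?_))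
  rw [mem_closedBall_zero_iff]
  refine ContinuousLinearMap.opNorm_le_bound _ zero_le_one fun x => ?_
  rw [one_mul]
  exact (Unitary.norm_map ⟨g, hg⟩ x).le

instance orthGroup_secondCountable : SecondCountableTopology (OrthGroup n) := by
  have : ProperSpace (EuclideanSpace ℝ (Fin n) →L[ℝ] EuclideanSpace ℝ (Fin n)) :=
    FiniteDimensional.proper ℝ _
  infer_instance

instance orthGroup_measurableSpace : MeasurableSpace (OrthGroup n) := borel _

instance orthGroup_borelSpace : BorelSpace (OrthGroup n) := ⟨rfl⟩

variable (n) in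
/-- A right Haar measure on the orthogonal group: the image under inversion of the (left) Haar
measure. -/
def orthMeasure : Measure (OrthGroup n) := (Measure.haar : Measure (OrthGroup n)).inv

instance orthMeasure_finite : IsFiniteMeasure (orthMeasure n) := by
  refine ⟨?_⟩
  rw [orthMeasure, Measure.inv_apply]
  exact measure_lt_top _ _

instance orthMeasure_sFinite : SFinite (orthMeasure n) :=
  haveI := orthMeasure_finite (n := n); inferInstance

instance orthMeasure_isOpenPos : (orthMeasure n).IsOpenPosMeasure := by
  refine ⟨fun U hU hne => ?_⟩
  rw [orthMeasure, Measure.inv_apply]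
  exact hU.inv.measure_ne_zero _ hne.inv

instance orthMeasure_rightInvariant : (orthMeasure n).IsMulRightInvariant := by
  unfold orthMeasure; infer_instance

lemma exists_orth_map {x y : EuclideanSpace ℝ (Fin n)} (h : ‖x‖ = ‖y‖) :
    ∃ g : OrthGroup n, g.1 x = y :=
  ⟨Unitary.linearIsometryEquiv.symm (Submodule.reflection (ℝ ∙ (x - y))ᗮ), by
    simpa using Submodule.reflection_sub h⟩

lemma exists_orth_map_pair {i j : Fin n} (hij : i ≠ j) {u v : EuclideanSpace ℝ (Fin n)}
    (hu : ‖u‖ = 1) (hv : ‖v‖ = 1) (huv : ⟪u, v⟫ = 0) :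
    ∃ g : OrthGroup n, g.1 (EuclideanSpace.single i 1) = u ∧
      g.1 (EuclideanSpace.single j 1) = v := by
  set w : Fin n → EuclideanSpace ℝ (Fin n) := fun k => if k = i then u else v with hw
  have hon : Orthonormal ℝ (({i, j} : Set (Fin n)).domRestrict w) := by
    refine ⟨fun ⟨k, hk⟩ => ?_, fun ⟨k, hk⟩ ⟨l, hl⟩ hkl => ?_⟩
    · rcases hk with rfl | rfl <;> simp [Set.domRestrict_apply, hw, hij.symm, hu, hv]
    · have hkl : k ≠ l := fun h => hkl (by simp [h])
      rcases hk with rfl | rfl <;> rcases hl with rfl | rfl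
      · exact absurd rfl hkl
      · simp [Set.domRestrict_apply, hw, hij.symm, huv]
      · simp [Set.domRestrict_apply, hw, hij.symm, (real_inner_comm u v).trans huv]
      · exact absurd rfl hkl
  obtain ⟨b, hb⟩ := hon.exists_orthonormalBasis_extension_of_card_eq (by simp)
  refine ⟨Unitary.linearIsometryEquiv.symm
    ((EuclideanSpace.basisFun (Fin n) ℝ).equiv b (Equiv.refl _)), ?_, ?_⟩
  · have := (EuclideanSpace.basisFun (Fin n) ℝ).equiv_apply_basis b (Equiv.refl _) i
    simp only [EuclideanSpace.basisFun_apply] at this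
    simp [this, hb i (by simp), hw]
  · have := (EuclideanSpace.basisFun (Fin n) ℝ).equiv_apply_basis b (Equiv.refl _) j
    simp only [EuclideanSpace.basisFun_apply] at this
    simp [this, hb j (by simp), hw, hij.symm]

lemma continuous_orth_apply {X : Type*} [TopologicalSpace X] {f : X → OrthGroup n}
    {x : X → EuclideanSpace ℝ (Fin n)} (hf : Continuous f) (hx : Continuous x) :
    Continuous fun t => (f t).1 (x t) :=
  (continuous_subtype_val.comp hf).clm_apply hx

/-- Averaging over rotations: up to the total mass of the group, the volume of `A` is the measure of
the pairs `(g, x)` for which the point of norm `‖x‖` in the direction `g e` lies in `A`. -/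
lemma orthMeasure_prod_eq {A : Set (EuclideanSpace ℝ (Fin n))} (hA : MeasurableSet A)
    {e : EuclideanSpace ℝ (Fin n)} (he : ‖e‖ = 1) :
    ((orthMeasure n).prod volume) {p : OrthGroup n × EuclideanSpace ℝ (Fin n) |
      p.1.1 (‖p.2‖ • e) ∈ A} = orthMeasure n univ * volume A := by
  have hm1 : MeasurableSet {p : OrthGroup n × EuclideanSpace ℝ (Fin n) |
      p.1.1 (‖p.2‖ • e) ∈ A} :=
    (continuous_orth_apply continuous_fst (by fun_prop)).measurable hA
  have hm2 : MeasurableSet {p : OrthGroup n × EuclideanSpace ℝ (Fin n) | p.1.1 p.2 ∈ A} :=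
    (continuous_orth_apply continuous_fst continuous_snd).measurable hA
  calc _ = ((orthMeasure n).prod volume)
        {p : OrthGroup n × EuclideanSpace ℝ (Fin n) | p.1.1 p.2 ∈ A} := by
        rw [Measure.prod_apply_symm hm1, Measure.prod_apply_symm hm2]
        refine lintegral_congr fun x => ?_
        obtain ⟨h, hh⟩ := exists_orth_map (x := ‖x‖ • e) (y := x) (by simp [norm_smul, he])
        rw [← measure_preimage_mul_right (orthMeasure n) h]
        congr 1
        ext g
        change g.1 (h.1 (‖x‖ • e)) ∈ A ↔ g.1 x ∈ A
        rw [hh]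
    _ = ∫⁻ _ : OrthGroup n, volume A ∂(orthMeasure n) := by
        rw [Measure.prod_apply hm2]
        refine lintegral_congr fun g => ?_
        exact (Unitary.linearIsometryEquiv g).measurePreserving.measure_preimage
          hA.nullMeasurableSet
    _ = _ := by rw [lintegral_const, mul_comm]

variable {S T : Set (EuclideanSpace ℝ (Fin n))}

lemma orth_inclusion (hST : ∀ x ∈ S, ∀ y, ⟪x, y⟫ = 0 → ‖y‖ = ‖x‖ → y ∈ T)
    {e f : EuclideanSpace ℝ (Fin n)} (he : ‖e‖ = 1) (hf : ‖f‖ = 1) (hef : ⟪e, f⟫ = 0) :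
    {p : OrthGroup n × EuclideanSpace ℝ (Fin n) | p.1.1 (‖p.2‖ • e) ∈ S} ⊆
      {p | p.1.1 (‖p.2‖ • f) ∈ T} := by
  rintro ⟨g, x⟩ h
  refine hST _ h _ ?_ ?_
  · rw [Unitary.inner_map_map]; simp [inner_smul_left, inner_smul_right, hef]
  · rw [Unitary.norm_map, Unitary.norm_map]; simp [norm_smul, he, hf]

/-- If `T` contains every vector orthogonal to, and as long as, some vector of `S`, then `T` has at
least the volume of `S`: rotate two orthogonal unit vectors `e`, `f` simultaneously. -/
lemma volume_le_of_orthogonal (hn : 2 ≤ n) (hS : IsClosed S) (hT : IsClosed T)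
    (hST : ∀ x ∈ S, ∀ y, ⟪x, y⟫ = 0 → ‖y‖ = ‖x‖ → y ∈ T) : volume S ≤ volume T := by
  set e : EuclideanSpace ℝ (Fin n) := EuclideanSpace.single ⟨0, by lia⟩ 1 with hedef
  set f : EuclideanSpace ℝ (Fin n) := EuclideanSpace.single ⟨1, by lia⟩ 1
  have he : ‖e‖ = 1 := by simp [e]
  have hf : ‖f‖ = 1 := by simp [f]
  have hef : ⟪e, f⟫ = 0 := by
    simp [e, f, EuclideanSpace.inner_single_left]
  have := measure_mono (μ := (orthMeasure n).prod volume) (orth_inclusion hST he hf hef)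
  rw [orthMeasure_prod_eq hS.measurableSet he, orthMeasure_prod_eq hT.measurableSet hf] at this
  exact (ENNReal.mul_le_mul_iff_right
    (isOpen_univ.measure_ne_zero _ ⟨1, mem_univ _⟩) (measure_ne_top _ _)).1 this

/-- In case of equal volumes the relation of `volume_le_of_orthogonal` can be reversed on the
interior of `T`, since a violation would occur on a nonempty open set of pairs `(g, x)`. -/
lemma mem_of_volume_eq_of_orthogonal (hn : 2 ≤ n) (hS : IsClosed S) (hT : IsClosed T)
    (hST : ∀ x ∈ S, ∀ y, ⟪x, y⟫ = 0 → ‖y‖ = ‖x‖ → y ∈ T) (hvol : volume S = volume T)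
    (hfin : volume T ≠ ∞) {x y : EuclideanSpace ℝ (Fin n)} (hy : y ∈ interior T) (hy0 : y ≠ 0)
    (hxy : ⟪x, y⟫ = 0) (hnorm : ‖x‖ = ‖y‖) : x ∈ S := by
  have hij : (⟨0, by lia⟩ : Fin n) ≠ ⟨1, by lia⟩ := by simp
  set e : EuclideanSpace ℝ (Fin n) := EuclideanSpace.single ⟨0, by lia⟩ 1 with hedef
  set f : EuclideanSpace ℝ (Fin n) := EuclideanSpace.single ⟨1, by lia⟩ 1 with hfdef
  have he : ‖e‖ = 1 := by simp [e]
  have hf : ‖f‖ = 1 := by simp [f]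
  have hef : ⟪e, f⟫ = 0 := by
    simp [e, f, EuclideanSpace.inner_single_left]
  have hce : Continuous fun p : OrthGroup n × EuclideanSpace ℝ (Fin n) => p.1.1 (‖p.2‖ • e) :=
    continuous_orth_apply continuous_fst (by fun_prop)
  have hcf : Continuous fun p : OrthGroup n × EuclideanSpace ℝ (Fin n) => p.1.1 (‖p.2‖ • f) :=
    continuous_orth_apply continuous_fst (by fun_prop)
  have hnull : ((orthMeasure n).prod volume)
      ({p : OrthGroup n × EuclideanSpace ℝ (Fin n) | p.1.1 (‖p.2‖ • f) ∈ T} \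
        {p | p.1.1 (‖p.2‖ • e) ∈ S}) = 0 := by
    rw [measure_sdiff (orth_inclusion hST he hf hef)
      (hce.measurable hS.measurableSet).nullMeasurableSet,
      orthMeasure_prod_eq hS.measurableSet he, orthMeasure_prod_eq hT.measurableSet hf, hvol,
      tsub_self]
    rw [orthMeasure_prod_eq hS.measurableSet he, hvol]
    exact ENNReal.mul_ne_top (measure_ne_top _ _) hfin
  by_contra hxS
  have hr : ‖y‖ ≠ 0 := norm_ne_zero_iff.2 hy0
  obtain ⟨g, hge, hgf⟩ := exists_orth_map_pair hij (u := ‖y‖⁻¹ • x) (v := ‖y‖⁻¹ • y)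
    (by rw [norm_smul, hnorm, norm_inv, norm_norm, inv_mul_cancel₀ hr])
    (by rw [norm_smul, norm_inv, norm_norm, inv_mul_cancel₀ hr])
    (by simp [inner_smul_left, inner_smul_right, hxy])
  have hopen : IsOpen ({p : OrthGroup n × EuclideanSpace ℝ (Fin n) |
      p.1.1 (‖p.2‖ • f) ∈ interior T} ∩ {p | p.1.1 (‖p.2‖ • e) ∈ Sᶜ}) :=
    (isOpen_interior.preimage hcf).inter (hS.isOpen_compl.preimage hce)
  refine hopen.measure_ne_zero ((orthMeasure n).prod volume) ⟨(g, y), ?_, ?_⟩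
    (measure_mono_null (inter_subset_inter (fun p hp => ?_) (fun p hp => ?_)) hnull)
  · change g.1 (‖y‖ • f) ∈ interior T
    rw [map_smul, hgf, smul_inv_smul₀ hr]
    exact hy
  · change g.1 (‖y‖ • e) ∈ Sᶜ
    rw [map_smul, hge, smul_inv_smul₀ hr]
    exact hxS
  · exact interior_subset (s := T) hp
  · exact hp

end Rotation

/-! ### Sine polars and star bodies -/

section Sine
variable {n : ℕ} {K : Set (EuclideanSpace ℝ (Fin n))}

lemma exists_orthogonal_norm_eq (hn : 3 ≤ n) (x y : EuclideanSpace ℝ (Fin n)) {r : ℝ}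
    (hr : 0 ≤ r) : ∃ z, ⟪z, x⟫ = 0 ∧ ⟪z, y⟫ = 0 ∧ ‖z‖ = r := by
  set U : Submodule ℝ (EuclideanSpace ℝ (Fin n)) := Submodule.span ℝ {x, y} with hU
  have h1 : Module.finrank ℝ U ≤ 2 := by
    classical
    have := finrank_span_finset_le_card (R := ℝ) ({x, y} : Finset (EuclideanSpace ℝ (Fin n)))
    simp only [Finset.coe_insert, Finset.coe_singleton] at this
    exact this.trans Finset.card_le_two
  have h2 := U.finrank_add_finrank_orthogonal
  rw [finrank_euclideanSpace_fin] at h2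
  have h3 : Uᗮ ≠ ⊥ := fun h => by
    rw [h, finrank_bot] at h2
    lia
  obtain ⟨w, hw, hw0⟩ := Submodule.exists_mem_ne_zero_of_ne_bot h3
  have hx := Submodule.inner_left_of_mem_orthogonal
    (Submodule.subset_span (mem_insert x {y}) : x ∈ U) hw
  have hy := Submodule.inner_left_of_mem_orthogonal
    (Submodule.subset_span (mem_insert_of_mem x (mem_singleton y)) : y ∈ U) hw
  refine ⟨(r / ‖w‖) • w, ?_, ?_, ?_⟩
  · rw [real_inner_smul_left, hx, mul_zero]
  · rw [real_inner_smul_left, hy, mul_zero]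
  · rw [norm_smul, Real.norm_of_nonneg (by positivity),
      div_mul_cancel₀ _ (norm_ne_zero_iff.2 hw0)]

lemma sinePair_le (x y : EuclideanSpace ℝ (Fin n)) : sinePair x y ≤ ‖x‖ * ‖y‖ := by
  rw [sinePair, Real.sqrt_le_left (by positivity)]
  nlinarith [sq_nonneg ⟪x, y⟫]

lemma sinePair_of_inner_eq_zero {x y : EuclideanSpace ℝ (Fin n)} (h : ⟪x, y⟫ = 0) :
    sinePair x y = ‖x‖ * ‖y‖ := by
  rw [sinePair, h, ← mul_pow]
  simp only [ne_eq, OfNat.ofNat_ne_zero, not_false_eq_true, zero_pow, sub_zero]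
  exact Real.sqrt_sq (by positivity)

/-- Bessel's inequality for the orthogonal pair `x, y` of vectors of equal length. -/
lemma abs_inner_le_sinePair {x y : EuclideanSpace ℝ (Fin n)} (hxy : ⟪x, y⟫ = 0)
    (h : ‖y‖ = ‖x‖) (k : EuclideanSpace ℝ (Fin n)) : |⟪y, k⟫| ≤ sinePair x k := by
  rcases eq_or_ne x 0 with rfl | hx
  · rw [norm_zero, norm_eq_zero] at h
    simp [h, sinePair]
  refine Real.abs_le_sqrt ?_
  have hN : 0 < ‖x‖ ^ 2 := by positivity
  have key : ‖‖x‖ ^ 2 • k - ⟪x, k⟫ • x - ⟪y, k⟫ • y‖ ^ 2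
      = ‖x‖ ^ 2 * (‖x‖ ^ 2 * ‖k‖ ^ 2 - ⟪x, k⟫ ^ 2 - ⟪y, k⟫ ^ 2) := by
    rw [← real_inner_self_eq_norm_sq]
    simp only [inner_sub_left, inner_sub_right, real_inner_smul_left, real_inner_smul_right,
      real_inner_self_eq_norm_sq, real_inner_comm x k, real_inner_comm y k,
      real_inner_comm x y, hxy, norm_smul, mul_pow, Real.norm_eq_abs, sq_abs, h]
    ring
  have h0 := sq_nonneg ‖‖x‖ ^ 2 • k - ⟪x, k⟫ • x - ⟪y, k⟫ • y‖
  rw [key] at h0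
  have := nonneg_of_mul_nonneg_right h0 hN
  linarith

lemma isClosed_sinePolar : IsClosed (sinePolar K) := by
  have : sinePolar K = ⋂ y ∈ K, {x | sinePair x y ≤ 1} := by ext; simp [sinePolar]
  rw [this]
  refine isClosed_biInter fun y _ => isClosed_le ?_ continuous_const
  unfold sinePair
  fun_prop

lemma isClosed_absPolar : IsClosed (absPolar K) := by
  have : absPolar K = ⋂ y ∈ K, {x | |⟪x, y⟫| ≤ 1} := by ext; simp [absPolar]
  rw [this]
  exact isClosed_biInter fun y _ => isClosed_le (by fun_prop) continuous_const

lemma mem_absPolar_of_mem_sinePolar {x y : EuclideanSpace ℝ (Fin n)} (hx : x ∈ sinePolar K)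
    (hxy : ⟪x, y⟫ = 0) (h : ‖y‖ = ‖x‖) : y ∈ absPolar K := fun k hk =>
  (abs_inner_le_sinePair hxy h k).trans (hx k hk)

/-- If the sine polar and the polar have the same volume, the polar is a centred ball. Let `y₀` be a
longest vector of the polar and `‖x‖ < ‖y₀‖`. In dimension at least three some `z` with `‖z‖ = ‖x‖`
is orthogonal to both `x` and `y₀`; then `z` lies in the sine polar, hence `x` in the polar. -/
lemma absPolar_eq_closedBall (hn : 3 ≤ n) {ε S : ℝ} (hε0 : 0 < ε) (hε : closedBall 0 ε ⊆ K)
    (hS0 : 0 < S) (hS : K ⊆ closedBall 0 S) (hvol : volume (sinePolar K) = volume (absPolar K)) :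
    ∃ R : ℝ, 0 < R ∧ absPolar K = closedBall 0 R := by
  have : Nonempty (Fin n) := ⟨⟨0, by lia⟩⟩
  have hKne : K.Nonempty := ⟨0, hε (by simpa using hε0.le)⟩
  have hsub := absPolar_subset hε0 hε hS
  have hsup := subset_absPolar hS0 hS
  have hcomp : IsCompact (absPolar K) :=
    (isCompact_closedBall 0 (1 / ε)).of_isClosed_subset isClosed_absPolar hsub
  obtain ⟨y₀, hy₀, hmax⟩ := hcomp.exists_isMaxOn
    ⟨0, hsup (by simpa using hS0.le)⟩ continuous_norm.continuousOn
  have hR : 0 < ‖y₀‖ := by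
    obtain ⟨u, hu⟩ := exists_norm_eq (EuclideanSpace ℝ (Fin n)) (show 0 ≤ 1 / S by positivity)
    have : ‖u‖ ≤ ‖y₀‖ := hmax (hsup (by simp [hu]))
    exact lt_of_lt_of_le (by rw [hu]; positivity) this
  refine ⟨‖y₀‖, hR, Subset.antisymm (fun y hy => ?_) ?_⟩
  · rw [mem_closedBall_zero_iff]; exact hmax hy
  have hball : ball 0 ‖y₀‖ ⊆ absPolar K := by
    intro x hx
    rw [mem_ball_zero_iff] at hx
    rcases eq_or_ne x 0 with rfl | hx0
    · exact hsup (by simpa using hS0.le)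
    have hxn : 0 < ‖x‖ := norm_pos_iff.2 hx0
    set t := ‖x‖ / ‖y₀‖ with ht
    have ht0 : 0 < t := by positivity
    have ht1 : t < 1 := (div_lt_one hR).2 hx
    have hty : ‖t • y₀‖ = ‖x‖ := by
      rw [norm_smul, Real.norm_of_nonneg ht0.le, ht, div_mul_cancel₀ _ hR.ne']
    obtain ⟨z, hzx, hzy, hz⟩ := exists_orthogonal_norm_eq hn x y₀ hxn.le
    have hint : t • y₀ ∈ interior (absPolar K) := by
      rw [absPolar_eq hKne hS] at hy₀ ⊢
      refine mem_interior.2 ⟨{x | absSupport K x < 1}, fun x hx => (show absSupport K x < 1 from hx).le,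
        isOpen_lt (continuous_absSupport hKne hS) continuous_const, ?_⟩
      have h1 := absSupport_smul hKne hS t y₀
      rw [abs_of_pos ht0] at h1
      have h2 : t * absSupport K y₀ ≤ t * 1 := mul_le_mul_of_nonneg_left hy₀ ht0.le
      exact lt_of_le_of_lt h1 (by linarith)
    have hzL : z ∈ sinePolar K :=
      mem_of_volume_eq_of_orthogonal (by lia) isClosed_sinePolar isClosed_absPolar
        (fun _ hx _ hxy h => mem_absPolar_of_mem_sinePolar hx hxy h) hvol hcomp.measure_ne_top hint
        (norm_pos_iff.1 (hty ▸ hxn)) (by rw [real_inner_smul_right, hzy, mul_zero]) (hz.trans hty.symm)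
    exact mem_absPolar_of_mem_sinePolar hzL hzx hz.symm
  rw [← closure_ball _ hR.ne']
  exact closure_minimal hball isClosed_absPolar

lemma volume_closedBall_mul (hn : 0 < n) {r s : ℝ} (hr : 0 < r) (hs : 0 < s) (hrs : r * s = 1) :
    volume (closedBall (0 : EuclideanSpace ℝ (Fin n)) r) *
      volume (closedBall (0 : EuclideanSpace ℝ (Fin n)) s) = ENNReal.ofReal (omegaVol n ^ 2) := by
  have : Nonempty (Fin n) := ⟨⟨0, hn⟩⟩
  have h1 : Real.sqrt Real.pi ^ n / Real.Gamma (n / 2 + 1) = omegaVol n := by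
    rw [omegaVol, add_comm, Real.sqrt_eq_rpow, ← Real.rpow_natCast, ← Real.rpow_mul Real.pi_pos.le]
    congr 2; ring
  have h0 : 0 ≤ omegaVol n := by
    rw [← h1]
    have : 0 < Real.Gamma ((n : ℝ) / 2 + 1) := Real.Gamma_pos_of_pos (by positivity)
    positivity
  rw [EuclideanSpace.volume_closedBall, EuclideanSpace.volume_closedBall, Fintype.card_fin, h1,
    ← ENNReal.ofReal_pow hr.le, ← ENNReal.ofReal_pow hs.le,
    ← ENNReal.ofReal_mul (by positivity), ← ENNReal.ofReal_mul (by positivity),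
    ← ENNReal.ofReal_mul (by positivity)]
  congr 1
  calc r ^ n * omegaVol n * (s ^ n * omegaVol n) = (r * s) ^ n * omegaVol n ^ 2 := by
        rw [mul_pow]; ring
    _ = _ := by rw [hrs, one_pow, one_mul]

lemma sinePolar_closedBall (hn : 3 ≤ n) {r : ℝ} (hr : 0 < r) :
    sinePolar (closedBall (0 : EuclideanSpace ℝ (Fin n)) r) = closedBall 0 (1 / r) := by
  ext x
  rw [mem_closedBall_zero_iff, le_div_iff₀ hr]
  refine ⟨fun h => ?_, fun h y hy => ?_⟩
  · obtain ⟨z, hz, -, hzr⟩ := exists_orthogonal_norm_eq hn x x hr.le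
    have := h z (by simp [hzr])
    rwa [sinePair_of_inner_eq_zero (by rwa [real_inner_comm]), hzr] at this
  · rw [mem_closedBall_zero_iff] at hy
    exact (sinePair_le x y).trans
      ((mul_le_mul_of_nonneg_left hy (norm_nonneg x)).trans h)

lemma IsStarBody.mem_iff (hK : IsStarBody K) {x : EuclideanSpace ℝ (Fin n)} (hx : x ≠ 0) :
    x ∈ K ↔ ‖x‖ ≤ radialFn K (‖x‖⁻¹ • x) := by
  have h := hK.2.2.2 (‖x‖⁻¹ • x) (by simp [norm_smul, norm_ne_zero_iff.2 hx]) ‖x‖ (norm_nonneg x)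
  rwa [smul_inv_smul₀ (norm_ne_zero_iff.2 hx)] at h

lemma IsStarBody.isClosed (hK : IsStarBody K) : IsClosed K := by
  rw [← isOpen_compl_iff]
  have hcont : ContinuousOn (fun x => ‖x‖ - radialFn K (‖x‖⁻¹ • x)) ({0}ᶜ) := by
    refine continuous_norm.continuousOn.sub (hK.2.2.1.comp ?_ fun x hx => ?_)
    · exact (continuous_norm.continuousOn.inv₀ fun x hx => norm_ne_zero_iff.2 hx).smul
        continuousOn_id
    · simp [norm_smul, norm_ne_zero_iff.2 hx]
  have := hcont.isOpen_inter_preimage isOpen_compl_singleton (isOpen_Ioi (a := (0 : ℝ)))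
  convert this using 1
  ext x
  rcases eq_or_ne x 0 with rfl | hx
  · simp [hK.1.1]
  · simp [hK.mem_iff hx, hx]

lemma IsStarBody.exists_bounds (hn : 0 < n) (hK : IsStarBody K) :
    ∃ ε S : ℝ, 0 < ε ∧ 0 < S ∧ closedBall 0 ε ⊆ K ∧ K ⊆ closedBall 0 S := by
  have : Nonempty (Fin n) := ⟨⟨0, hn⟩⟩
  have hcomp := isCompact_sphere (0 : EuclideanSpace ℝ (Fin n)) 1
  have hne : (sphere (0 : EuclideanSpace ℝ (Fin n)) 1).Nonempty :=
    NormedSpace.sphere_nonempty.2 zero_le_one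
  obtain ⟨u, hu, humin⟩ := hcomp.exists_isMinOn hne hK.2.2.1
  obtain ⟨v, hv, hvmax⟩ := hcomp.exists_isMaxOn hne hK.2.2.1
  have hs : ∀ {x : EuclideanSpace ℝ (Fin n)}, x ≠ 0 → ‖x‖⁻¹ • x ∈ sphere 0 1 := fun hx => by
    simp [norm_smul, norm_ne_zero_iff.2 hx]
  refine ⟨radialFn K u, radialFn K v, hK.2.1 u hu, hK.2.1 v hv, fun x hx => ?_, fun x hx => ?_⟩
  · rcases eq_or_ne x 0 with rfl | hx0
    · exact hK.1.1
    · rw [mem_closedBall_zero_iff] at hx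
      exact (hK.mem_iff hx0).2 (hx.trans (humin (hs hx0)))
  · rw [mem_closedBall_zero_iff]
    rcases eq_or_ne x 0 with rfl | hx0
    · simpa using (hK.2.1 v hv).le
    · exact ((hK.mem_iff hx0).1 hx).trans (hvmax (hs hx0))

/-- A closed subset of a ball with the full volume of the ball is the ball. -/
lemma eq_closedBall_of_volume_eq {r : ℝ} (hr : 0 < r) (hK : IsClosed K)
    (hsub : K ⊆ closedBall 0 r)
    (hvol : volume K = volume (closedBall (0 : EuclideanSpace ℝ (Fin n)) r)) :
    K = closedBall 0 r := by
  have hnull : volume (closedBall (0 : EuclideanSpace ℝ (Fin n)) r \ K) = 0 := by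
    rw [measure_sdiff hsub hK.measurableSet.nullMeasurableSet
      (ne_top_of_le_ne_top (isCompact_closedBall _ _).measure_ne_top (measure_mono hsub)), hvol,
      tsub_self]
  refine hsub.antisymm ?_
  rw [← closure_ball _ hr.ne']
  refine closure_minimal (fun x hx => ?_) hK
  by_contra hxK
  exact (isOpen_ball.inter hK.isOpen_compl).measure_ne_zero volume ⟨x, hx, hxK⟩
    (measure_mono_null (inter_subset_inter_left _ ball_subset_closedBall) hnull)

end Sine

/-! ### The equality case -/

/-- equality in the sine Blaschke–Santaló inequality for `n ≥ 3`. -/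
theorem sine_blaschke_santalo_equality {n : ℕ} (hn : 3 ≤ n)
    {K : Set (EuclideanSpace ℝ (Fin n))} (hK : IsStarBody K) :
    volume K * volume (sinePolar K) = ENNReal.ofReal (omegaVol n ^ 2) ↔
      ∃ r : ℝ, 0 < r ∧ K = closedBall (0 : EuclideanSpace ℝ (Fin n)) r := by
  constructor
  · intro heq
    obtain ⟨ε, S, hε0, hS0, hε, hS⟩ := hK.exists_bounds (by lia)
    have hVpos : volume K ≠ 0 := fun h =>
      (measure_closedBall_pos volume (0 : EuclideanSpace ℝ (Fin n)) hε0).ne'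
        (measure_mono_null hε h)
    have hVfin : volume K ≠ ∞ :=
      ne_top_of_le_ne_top (isCompact_closedBall _ _).measure_ne_top (measure_mono hS)
    have hle : volume (sinePolar K) ≤ volume (absPolar K) :=
      volume_le_of_orthogonal (by lia) isClosed_sinePolar isClosed_absPolar
        fun _ hx _ hxy h => mem_absPolar_of_mem_sinePolar hx hxy h
    have hBS := blaschke_santalo (by lia) hε0 hε hS
    have hvol : volume (sinePolar K) = volume (absPolar K) :=
      hle.antisymm ((ENNReal.mul_le_mul_iff_right hVpos hVfin).1 (hBS.trans heq.ge))
    obtain ⟨R, hR, hpolar⟩ := absPolar_eq_closedBall hn hε0 hε hS0 hS hvol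
    refine ⟨1 / R, by positivity, eq_closedBall_of_volume_eq (by positivity) hK.isClosed
      (fun k hk => ?_) ?_⟩
    · rw [mem_closedBall_zero_iff, le_div_iff₀ hR]
      rcases eq_or_ne k 0 with rfl | hk0
      · simp
      have hkn : ‖k‖ ≠ 0 := norm_ne_zero_iff.2 hk0
      have hmem : (R / ‖k‖) • k ∈ absPolar K := by
        rw [hpolar, mem_closedBall_zero_iff, norm_smul, Real.norm_of_nonneg (by positivity),
          div_mul_cancel₀ _ hkn]
      have := hmem k hk
      rw [real_inner_smul_left, real_inner_self_eq_norm_sq, abs_of_nonneg (by positivity)] at this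
      calc ‖k‖ * R = R / ‖k‖ * ‖k‖ ^ 2 := by field_simp
        _ ≤ 1 := this
    · rw [hvol, hpolar, ← volume_closedBall_mul (by lia) (show 0 < 1 / R by positivity) hR
        (by field_simp)] at heq
      exact (ENNReal.mul_left_inj
        (measure_closedBall_pos volume (0 : EuclideanSpace ℝ (Fin n)) hR).ne'
        (isCompact_closedBall _ _).measure_ne_top).1 heq
  · rintro ⟨r, hr, rfl⟩
    rw [sinePolar_closedBall hn hr]
    exact volume_closedBall_mul (by lia) hr (by positivity) (by field_simp)
end
end

section
/- Let n ≥ 2 and let K ⊆ ℝⁿ be a bounded set that is not contained in any 1-dimensional linear subspace. Then the sine polar body K^◇ is an origin-symmetric convex body (compact, convex, symmetric about the origin, with nonempty interior) that can be written as an intersection of closed solid cylinders; that is, K^◇ ∈ C_e^n. -/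
/-!
For fixed `y`, the linear map `L_y x = |y|² x - (x·y) y` satisfies `|L_y x| = |y| [x,y]`, so
`[x,y] ≤ 1` exactly when `|L_y x| ≤ |y|` (`sinePair_le_one_iff`). Hence `K^◇` is an intersection
of preimages of closed balls under continuous linear maps, which makes it closed, convex and
symmetric. Since `[x,y] ≤ |x||y|`, boundedness of `K` puts a ball around the origin inside `K^◇`.

For boundedness of `K^◇`: as `K` lies on no line through the origin, it contains linearly
independent `y`, `z`. The kernel of `L_y` is the line spanned by `y`, and likewise for `z`, so
`x ↦ (L_y x, L_z x)` is injective, hence antilipschitz in finite dimension, and `K^◇` is contained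
in the preimage of a bounded set (`isBounded_sinePolar`).

Finally `[x,y] = |y| [x, y/|y|]`, so the condition from a nonzero `y ∈ K` is membership in the
cylinder `C⁻(y/|y|, 1/|y|)`, and `y = 0` gives no condition.
-/

open MeasureTheory Metric Set
open scoped RealInnerProductSpace ENNReal

noncomputable section

/-- The map `x ↦ |y|² x - (x·y) y`, i.e. `|y|²` times the orthogonal projection onto `y^⊥`. The
scaling avoids dividing by `|y|`. -/
def perpMap {n : ℕ} (y : EuclideanSpace ℝ (Fin n)) :
    EuclideanSpace ℝ (Fin n) →L[ℝ] EuclideanSpace ℝ (Fin n) :=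
  ‖y‖ ^ 2 • ContinuousLinearMap.id ℝ _ - (innerSL ℝ y).smulRight y

lemma perpMap_apply {n : ℕ} (y x : EuclideanSpace ℝ (Fin n)) :
    perpMap y x = ‖y‖ ^ 2 • x - ⟪x, y⟫ • y := by
  simp [perpMap, real_inner_comm]

lemma norm_perpMap {n : ℕ} (y x : EuclideanSpace ℝ (Fin n)) :
    ‖perpMap y x‖ = ‖y‖ * sinePair x y := by
  have h : ‖perpMap y x‖ ^ 2 = ‖y‖ ^ 2 * (‖x‖ ^ 2 * ‖y‖ ^ 2 - ⟪x, y⟫ ^ 2) := by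
    rw [perpMap_apply, norm_sub_sq_real, norm_smul, norm_smul, real_inner_smul_left,
      real_inner_smul_right, mul_pow, mul_pow, Real.norm_eq_abs, Real.norm_eq_abs, sq_abs, sq_abs]
    ring
  rw [← Real.sqrt_sq (norm_nonneg (perpMap y x)), h, Real.sqrt_mul (sq_nonneg _),
    Real.sqrt_sq (norm_nonneg y), sinePair]

lemma sinePair_le_one_iff {n : ℕ} (x y : EuclideanSpace ℝ (Fin n)) :
    sinePair x y ≤ 1 ↔ ‖perpMap y x‖ ≤ ‖y‖ := by
  rcases eq_or_ne y 0 with rfl | hy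
  · simp [sinePair, perpMap_apply]
  · rw [norm_perpMap, mul_le_iff_le_one_right (norm_pos_iff.2 hy)]

lemma sinePolar_eq {n : ℕ} (K : Set (EuclideanSpace ℝ (Fin n))) :
    sinePolar K = ⋂ y ∈ K, perpMap y ⁻¹' closedBall 0 ‖y‖ := by
  ext x
  simp [sinePolar, sinePair_le_one_iff]

lemma sinePair_le_norm_mul {n : ℕ} (x y : EuclideanSpace ℝ (Fin n)) :
    sinePair x y ≤ ‖x‖ * ‖y‖ := by
  rw [sinePair, ← mul_pow]
  apply Real.sqrt_le_iff.2
  exact ⟨by positivity, sub_le_self _ (sq_nonneg _)⟩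

lemma sinePair_smul_right {n : ℕ} (x y : EuclideanSpace ℝ (Fin n)) {c : ℝ} (hc : 0 ≤ c) :
    sinePair x (c • y) = c * sinePair x y := by
  rw [sinePair, sinePair, norm_smul, real_inner_smul_right, Real.norm_eq_abs, mul_pow, sq_abs,
    show ‖x‖ ^ 2 * (c ^ 2 * ‖y‖ ^ 2) - (c * ⟪x, y⟫) ^ 2
      = c ^ 2 * (‖x‖ ^ 2 * ‖y‖ ^ 2 - ⟪x, y⟫ ^ 2) by ring,
    Real.sqrt_mul (sq_nonneg _), Real.sqrt_sq hc]

lemma mem_span_of_perpMap_eq_zero {n : ℕ} {x y : EuclideanSpace ℝ (Fin n)} (hy : y ≠ 0)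
    (h : perpMap y x = 0) : x ∈ Submodule.span ℝ {y} := by
  rw [perpMap_apply, sub_eq_zero] at h
  have hy2 : ‖y‖ ^ 2 ≠ 0 := pow_ne_zero 2 (norm_ne_zero_iff.2 hy)
  refine Submodule.mem_span_singleton.2 ⟨(‖y‖ ^ 2)⁻¹ * ⟪x, y⟫, ?_⟩
  rw [mul_smul, ← h, inv_smul_smul₀ hy2]

lemma isBounded_sinePolar {n : ℕ} {K : Set (EuclideanSpace ℝ (Fin n))}
    (h1 : ∀ v : EuclideanSpace ℝ (Fin n), ¬ K ⊆ ↑(Submodule.span ℝ {v})) :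
    Bornology.IsBounded (sinePolar K) := by
  obtain ⟨y, hyK, hy⟩ := not_subset.1 (h1 0)
  obtain ⟨z, hzK, hz⟩ := not_subset.1 (h1 y)
  have hy0 : y ≠ 0 := fun h => hy (by simp [h])
  have hz0 : z ≠ 0 := fun h => hz (by simp [h])
  let T := (perpMap y).prod (perpMap z)
  have hT : LinearMap.ker T.toLinearMap = ⊥ := by
    refine LinearMap.ker_eq_bot'.2 fun x hx => ?_
    have hx' : perpMap y x = 0 ∧ perpMap z x = 0 := Prod.mk_eq_zero.1 hx
    obtain ⟨a, rfl⟩ := Submodule.mem_span_singleton.1 (mem_span_of_perpMap_eq_zero hy0 hx'.1)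
    obtain ⟨b, hb⟩ := Submodule.mem_span_singleton.1 (mem_span_of_perpMap_eq_zero hz0 hx'.2)
    by_contra hne
    have hb0 : b ≠ 0 := by
      rintro rfl
      exact hne (by rw [← hb, zero_smul])
    refine hz (Submodule.mem_span_singleton.2 ⟨b⁻¹ * a, ?_⟩)
    rw [mul_smul, ← hb, inv_smul_smul₀ hb0]
  obtain ⟨C, -, hC⟩ := LinearMap.exists_antilipschitzWith _ hT
  refine (hC.isBounded_preimage ((isBounded_closedBall (x := 0) (r := ‖y‖)).prod
    (isBounded_closedBall (x := 0) (r := ‖z‖)))).subset fun x hx => ?_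
  have hxy := (sinePair_le_one_iff x y).1 (hx y hyK)
  have hxz := (sinePair_le_one_iff x z).1 (hx z hzK)
  exact ⟨mem_closedBall_zero_iff.2 hxy, mem_closedBall_zero_iff.2 hxz⟩

/-- the sine polar body of a bounded set not contained in a line is in `C_e^n`. -/
theorem sinePolar_isCylBody {n : ℕ} (hn : 2 ≤ n) {K : Set (EuclideanSpace ℝ (Fin n))}
    (hb : Bornology.IsBounded K)
    (h1 : ∀ v : EuclideanSpace ℝ (Fin n), ¬ K ⊆ ↑(Submodule.span ℝ {v})) :
    IsCylBody (sinePolar K) := by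
  refine ⟨isCompact_of_isClosed_isBounded ?_ (isBounded_sinePolar h1), ?_, ?_, ?_, ?_⟩
  · rw [sinePolar_eq]
    exact isClosed_biInter fun y _ => isClosed_closedBall.preimage (perpMap y).continuous
  · rw [sinePolar_eq]
    exact convex_iInter₂ fun y _ => (convex_closedBall 0 ‖y‖).linear_preimage
      (perpMap y : EuclideanSpace ℝ (Fin n) →ₗ[ℝ] EuclideanSpace ℝ (Fin n))
  · obtain ⟨R, hR, hKR⟩ := hb.exists_pos_norm_le
    refine ⟨0, mem_interior_iff_mem_nhds.2 (Metric.mem_nhds_iff.2 ⟨R⁻¹, inv_pos.2 hR, ?_⟩)⟩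
    intro x hx y hy
    have hx' : ‖x‖ ≤ R⁻¹ := (mem_ball_zero_iff.1 hx).le
    calc sinePair x y ≤ ‖x‖ * ‖y‖ := sinePair_le_norm_mul x y
      _ ≤ R⁻¹ * R := mul_le_mul hx' (hKR y hy) (norm_nonneg y) (inv_pos.2 hR).le
      _ = 1 := inv_mul_cancel₀ hR.ne'
  · intro x hx y hy
    simpa [sinePair] using hx y hy
  · refine ⟨(fun y => (‖y‖⁻¹ • y, ‖y‖⁻¹)) '' (K \ {0}), ?_, ?_⟩
    · rintro _ ⟨y, ⟨-, hy⟩, rfl⟩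
      have hy0 : y ≠ 0 := hy
      exact ⟨by simp [norm_smul, hy0], inv_pos.2 (norm_pos_iff.2 hy0)⟩
    · ext x
      simp only [biInter_image, mem_iInter, solidCylinder, mem_ofPred_eq, sinePolar]
      have key : ∀ y : EuclideanSpace ℝ (Fin n), y ≠ 0 →
          (sinePair x (‖y‖⁻¹ • y) ≤ ‖y‖⁻¹ ↔ sinePair x y ≤ 1) := fun y hy => by
        have hpos := inv_pos.2 (norm_pos_iff.2 hy)
        rw [sinePair_smul_right x y hpos.le, mul_le_iff_le_one_right hpos]
      constructor
      · exact fun h y hy => (key y hy.2).2 (h y hy.1)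
      · intro h y hy
        rcases eq_or_ne y 0 with rfl | hy0
        · simp [sinePair]
        · exact (key y hy0).1 (h y ⟨hy, hy0⟩)
end
end

section
/- Let n ≥ 2 and K ∈ C_e^n. Then K = ⋂_{u ∈ S^{n-1}} C⁻(u, c_K(u)), where c_K(u) = max_{y ∈ K} [u,y] is the cylindrical support function of K. -/
/-!
The bracket `[x,y]` is symmetric and continuous, so on a compact `K` it attains its supremum
`c_K(u)`, and `K ⊆ C⁻(u, c_K(u))` for every direction `u`. Conversely, if `K` is an intersection of
cylinders `C⁻(u,r)`, then each of them contains `K`, hence `c_K(u) ≤ r` and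
`C⁻(u, c_K(u)) ⊆ C⁻(u,r)`; intersecting over the family gives the other inclusion.
-/

open MeasureTheory Metric Set
open scoped RealInnerProductSpace ENNReal

noncomputable section

lemma sinePair_comm {n : ℕ} (x y : EuclideanSpace ℝ (Fin n)) : sinePair x y = sinePair y x := by
  unfold sinePair
  rw [real_inner_comm, mul_comm]

lemma continuous_sinePair_right {n : ℕ} (x : EuclideanSpace ℝ (Fin n)) :
    Continuous fun y => sinePair x y := by
  unfold sinePair
  fun_prop

/-- a body in `C_e^n` equals the intersection of its supporting solid
cylinders. -/
theorem cylBody_eq_iInter_solidCylinder {n : ℕ} (hn : 2 ≤ n)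
    {K : Set (EuclideanSpace ℝ (Fin n))} (hK : IsCylBody K) :
    K = ⋂ u ∈ sphere (0 : EuclideanSpace ℝ (Fin n)) 1, solidCylinder u (cylSupport K u) := by
  obtain ⟨hcomp, -, hint, -, I, hI, hKI⟩ := hK
  have hne : K.Nonempty := hint.mono interior_subset
  apply Subset.antisymm
  · intro x hx
    simp only [mem_iInter]
    intro u _
    -- compactness makes the supremum `cylSupport K u` a genuine upper bound
    have hbdd : BddAbove ((fun y => sinePair u y) '' K) :=
      hcomp.bddAbove_image (continuous_sinePair_right u).continuousOn
    change sinePair x u ≤ cylSupport K u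
    rw [sinePair_comm]
    exact le_csSup hbdd (mem_image_of_mem _ hx)
  · intro x hx
    simp only [mem_iInter] at hx
    rw [hKI]
    simp only [mem_iInter]
    intro c hc
    have hxc : sinePair x c.1 ≤ cylSupport K c.1 := hx c.1 (hI c hc).1
    refine hxc.trans (csSup_le (hne.image _) ?_)
    rintro _ ⟨y, hy, rfl⟩
    rw [hKI] at hy
    simp only [mem_iInter] at hy
    change sinePair c.1 y ≤ c.2
    rw [sinePair_comm]
    exact hy c hc
end
end
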